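/- arXiv:2301.04462 — 2 statements merged into one kernel-verified Lean document; each statement's English description precedes it below -/
import Mathlib

section
/- Stochastic approximation of a differential inclusion with a Lyapunov function: let H : ℝ^n → Set(ℝ^n) be a Marchaud map, and suppose there exists a Lyapunov function L for the differential inclusion ∂_t z_t ∈ H(z_t) and a subset Λ ⊆ ℝ^n. Let (θ_k)_{k≥0} satisfy θ_{k+1} = θ_k + α_k(g_k + w_k), where the nonnegative step sizes satisfy Σ_k α_k = ∞ and α_k = o(1/log k), g_k ∈ H(θ_k) for all k, and (w_k)_{k≥0} is a martingale difference sequence with respect to the natural filtration generated by (θ_k): there exists a constant C with ‖w_k‖_∞ < C almost surely and E[w_k | θ_0,…,θ_k] = 0. If in addition sup_{k≥0} ‖θ_k‖_∞ < ∞ almost surely, then θ_k converges to Λ almost surely (i.e., dist(θ_k, Λ) → 0 with probability 1). -/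
open MeasureTheory Set
open scoped ENNReal

/-- A set-valued map `H : ℝ^n → Set (ℝ^n)` is a Marchaud map: closed graph; nonempty compact
convex values; linear growth. -/
def IsMarchaud {n : ℕ} (H : (Fin n → ℝ) → Set (Fin n → ℝ)) : Prop :=
  IsClosed {p : (Fin n → ℝ) × (Fin n → ℝ) | p.2 ∈ H p.1}
  ∧ (∀ z, (H z).Nonempty ∧ IsCompact (H z) ∧ Convex ℝ (H z))
  ∧ ∃ C : ℝ, 0 < C ∧ ∀ z, ∀ h ∈ H z, ‖h‖ ≤ C * (1 + ‖z‖)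

/-- A solution of the differential inclusion `∂_t z_t ∈ H(z_t)` on `[0,∞)`: there is a locally
integrable `g` with `z_t = z_0 + ∫_0^t g_s ds` for all `t ≥ 0` and `g_s ∈ H(z_s)` for almost
all `s ≥ 0`. -/
def IsDISolution {n : ℕ} (H : (Fin n → ℝ) → Set (Fin n → ℝ)) (z : ℝ → Fin n → ℝ) : Prop :=
  ∃ g : ℝ → Fin n → ℝ,
    (∀ t : ℝ, 0 ≤ t → IntegrableOn g (Set.Icc 0 t))
    ∧ (∀ t : ℝ, 0 ≤ t → z t = z 0 + ∫ s in Set.Ioc (0:ℝ) t, g s)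
    ∧ (∀ᵐ s ∂(volume.restrict (Set.Ici (0:ℝ))), g s ∈ H (z s))

/-- `L` is a Lyapunov function for the differential inclusion `∂_t z_t ∈ H(z_t)` and the set
`Λ`: continuous, nonnegative, vanishing on `Λ`, and strictly decreasing along every solution
while outside `Λ`. -/
def IsLyapunovFn {n : ℕ} (H : (Fin n → ℝ) → Set (Fin n → ℝ)) (Λ : Set (Fin n → ℝ))
    (L : (Fin n → ℝ) → ℝ) : Prop :=
  Continuous L ∧ (∀ z, 0 ≤ L z) ∧ (∀ z ∈ Λ, L z = 0)
  ∧ ∀ z : ℝ → Fin n → ℝ, IsDISolution H z →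
      ∀ s t : ℝ, 0 ≤ s → s < t → z s ∉ Λ → L (z t) < L (z s)

/-!
The noise `w k` is centred given the past but, like the drift `g k`, it need not be known at time
`k + 1`. What is known is the velocity `u k = g k + w k`, whose conditional expectation is still a
selection of `H (θ k)`, as the values of `H` are closed and convex and depend upper hemicontinuously
on the point. Truncating `u` to a ball of iterates and recentring it there leaves bounded martingale
differences; an exponential maximal inequality and Borel–Cantelli show that these cancel over
windows of bounded elapsed time, since `α k = o(1 / log k)`. Almost every bounded orbit is therefore
a perturbed Euler scheme with asymptotically negligible perturbations.

For such a scheme, limits of the time shifts of the piecewise constant path along an ultrafilter are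
solutions of the inclusion. Hence every limit point is the value at time `1` of a solution that
starts at another limit point. On the compact set of limit points, `L` attains its maximum at a
point reached from a point where `L` is no larger, so this maximum is `0`; as `L` would decrease
below `0` along a solution leaving a limit point outside `Λ`, all limit points lie in `Λ`.
-/

open Filter Topology

section Inclusions

variable {n : ℕ} {H : (Fin n → ℝ) → Set (Fin n → ℝ)} {Λ : Set (Fin n → ℝ)}
  {L : (Fin n → ℝ) → ℝ} {z : ℝ → Fin n → ℝ}

namespace IsMarchaud

lemma isCompact (hH : IsMarchaud H) (x : Fin n → ℝ) : IsCompact (H x) :=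
  (hH.2.1 x).2.1

lemma isClosed (hH : IsMarchaud H) (x : Fin n → ℝ) : IsClosed (H x) :=
  (hH.isCompact x).isClosed

lemma convex (hH : IsMarchaud H) (x : Fin n → ℝ) : Convex ℝ (H x) :=
  (hH.2.1 x).2.2

lemma upperHemicontinuous (hH : IsMarchaud H) : UpperHemicontinuous H := by
  refine upperHemicontinuous_iff_forall_isOpen.2 fun x U hU hxU => ?_
  obtain ⟨hgraph, -, C, hC, hgrowth⟩ := hH
  have hfar : ∀ᶠ y in 𝓝 x, ∀ v ∈ Metric.closedBall 0 (C * (1 + (1 + ‖x‖))) \ U, v ∉ H y :=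
    ((isCompact_closedBall _ _).diff hU).eventually_forall_of_forall_eventually fun v hv =>
      hgraph.isOpen_compl.mem_nhds fun hvx => hv.2 (hxU hvx)
  have hnear : ∀ᶠ y in 𝓝 x, ‖y‖ < 1 + ‖x‖ :=
    continuous_norm.continuousAt.eventually_lt_const (by linarith)
  filter_upwards [hfar, hnear] with y hyfar hynear v hv
  by_contra hvU
  refine hyfar v ⟨mem_closedBall_zero_iff.2 ((hgrowth y v hv).trans ?_), hvU⟩ hv
  gcongr

lemma eventually_subset_cthickening (hH : IsMarchaud H) (x : Fin n → ℝ) {ε : ℝ} (hε : 0 < ε) :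
    ∀ᶠ y in 𝓝 x, H y ⊆ Metric.cthickening ε (H x) := by
  filter_upwards [hH.upperHemicontinuous x _ (Metric.thickening_mem_nhdsSet (H x) hε)] with y hy
  exact (subset_of_mem_nhdsSet hy).trans (Metric.thickening_subset_cthickening ε (H x))

lemma mem_of_forall_mem_cthickening (hH : IsMarchaud H) {x v : Fin n → ℝ}
    (hv : ∀ ε > 0, v ∈ Metric.cthickening ε (H x)) : v ∈ H x := by
  rw [← (hH.isClosed x).closure_eq, Metric.closure_eq_iInter_cthickening]
  exact mem_iInter₂.2 hv

end IsMarchaud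

lemma integral_deriv_eq_sub_of_lipschitzWith {ι : Type*} [Fintype ι] {f : ℝ → ι → ℝ}
    {K : NNReal} (hf : LipschitzWith K f) (a b : ℝ) : ∫ s in a..b, deriv f s = f b - f a := by
  have hint : IntervalIntegrable (deriv f) volume a b :=
    (intervalIntegrable_const (c := (K : ℝ))).mono_fun
      (measurable_deriv f).aestronglyMeasurable
      (Eventually.of_forall fun s => by
        simpa using norm_deriv_le_of_lipschitz hf)
  ext i
  have hfi : LipschitzWith K fun s => f s i := by
    simpa [Function.comp_def] using (LipschitzWith.eval i).comp hf
  calc (∫ s in a..b, deriv f s) i = ∫ s in a..b, deriv f s i :=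
        ((ContinuousLinearMap.proj (R := ℝ) (φ := fun _ : ι => ℝ) i).intervalIntegral_comp_comm
          hint).symm
    _ = ∫ s in a..b, deriv (fun r => f r i) s := by
        refine intervalIntegral.integral_congr_ae ?_
        filter_upwards [hf.ae_differentiableAt_real] with s hs _
        exact (hasDerivAt_pi.1 hs.hasDerivAt i).deriv.symm
    _ = (f b - f a) i :=
        hfi.lipschitzOnWith.absolutelyContinuousOnInterval.integral_deriv_eq_sub

namespace IsDISolution

lemma of_lipschitzWith {K : NNReal} (hz : LipschitzWith K z)
    (hderiv : ∀ t v, HasDerivAt z v t → v ∈ H (z t)) : IsDISolution H z := by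
  refine ⟨deriv z, fun t _ => ?_, fun t ht => ?_, ?_⟩
  · exact Measure.integrableOn_of_bounded (M := K) measure_Icc_lt_top.ne
      (measurable_deriv z).aestronglyMeasurable
      (Eventually.of_forall fun s => norm_deriv_le_of_lipschitz hz)
  · rw [← intervalIntegral.integral_of_le ht, integral_deriv_eq_sub_of_lipschitzWith hz,
      add_sub_cancel]
  · refine ae_restrict_of_ae ?_
    filter_upwards [hz.ae_differentiableAt_real] with s hs
    exact hderiv s _ hs.hasDerivAt

lemma continuousOn_Icc (hz : IsDISolution H z) {t : ℝ} (ht : 0 ≤ t) :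
    ContinuousOn z (Icc 0 t) := by
  obtain ⟨v, hv, hzv, -⟩ := hz
  exact (continuousOn_const.add (intervalIntegral.continuousOn_primitive (hv t ht))).congr
    fun s hs => hzv s hs.1

end IsDISolution

namespace IsLyapunovFn

lemma antitoneOn (hL : IsLyapunovFn H Λ L) (hz : IsDISolution H z) :
    AntitoneOn (L ∘ z) (Ici 0) := by
  obtain ⟨hcont, -, hzero, hdec⟩ := hL
  intro s hs t ht hst
  by_contra! hlt
  have hLz : ContinuousOn (L ∘ z) (Icc 0 t) := hcont.comp_continuousOn (hz.continuousOn_Icc ht)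
  have hst' : s < t := hst.lt_of_ne fun h => hlt.ne (by rw [h])
  have hsΛ : z s ∈ Λ := by
    by_contra h
    exact (hdec z hz s t hs hst' h).not_gt hlt
  -- From the last time `r` before `t` at which `L` vanishes on, `L` decreases strictly.
  have hcompact : IsCompact (Icc s t ∩ (L ∘ z) ⁻¹' {0}) :=
    isCompact_Icc.of_isClosed_subset
      ((hLz.mono (Icc_subset_Icc_left hs)).preimage_isClosed_of_isClosed isClosed_Icc
        isClosed_singleton) inter_subset_left
  obtain ⟨r, ⟨hr, hr0⟩, hmax⟩ :=
    hcompact.exists_isGreatest ⟨s, left_mem_Icc.2 hst, hzero _ hsΛ⟩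
  have hpos : L (z r) < L (z t) := ((hr0 : L (z r) = 0).trans (hzero _ hsΛ).symm).trans_lt hlt
  have hrt : r < t := hr.2.lt_of_ne fun h => hpos.ne (by rw [h])
  have hlim : Tendsto (L ∘ z) (𝓝[Ioo r t] r) (𝓝 (L (z r))) :=
    (hLz r ⟨le_trans hs hr.1, hr.2⟩).mono_left
      (nhdsWithin_mono r fun u hu => ⟨(le_trans hs hr.1).trans hu.1.le, hu.2.le⟩)
  have : (𝓝[Ioo r t] r).NeBot := left_nhdsWithin_Ioo_neBot hrt
  refine hpos.not_ge (ge_of_tendsto hlim ?_)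
  filter_upwards [self_mem_nhdsWithin] with u hu
  have hsu : s ≤ u := hr.1.trans hu.1.le
  refine (hdec z hz u t (le_trans hs hsu) hu.2 fun huΛ => ?_).le
  exact (hmax ⟨⟨hsu, hu.2.le⟩, hzero _ huΛ⟩).not_gt hu.1

lemma eq_zero_of_le (hL : IsLyapunovFn H Λ L) (hz : IsDISolution H z) {t : ℝ} (ht : 0 < t)
    (hle : L (z 0) ≤ L (z t)) : L (z t) = 0 := by
  have h0 : z 0 ∈ Λ := by
    by_contra h
    exact (hL.2.2.2 z hz 0 t le_rfl ht h).not_ge hle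
  refine le_antisymm ?_ (hL.2.1 _)
  exact (hL.antitoneOn hz self_mem_Ici ht.le ht.le).trans (hL.2.2.1 _ h0).le

lemma subset_of_isCompact (hL : IsLyapunovFn H Λ L) {A : Set (Fin n → ℝ)} (hA : IsCompact A)
    (hback : ∀ a ∈ A, ∃ z, ∃ t > 0, IsDISolution H z ∧ z 0 ∈ A ∧ z t = a) : A ⊆ Λ := by
  intro a ha
  obtain ⟨b, hb, hmax⟩ := hA.exists_isMaxOn ⟨a, ha⟩ hL.1.continuousOn
  have hb0 : L b = 0 := by
    obtain ⟨z, t, ht, hz, hz0, rfl⟩ := hback b hb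
    exact hL.eq_zero_of_le hz ht (hmax hz0)
  obtain ⟨z, t, ht, hz, -, rfl⟩ := hback a ha
  by_contra hout
  have hdec : L (z (t + 1)) < L (z t) :=
    hL.2.2.2 z hz t (t + 1) ht.le (lt_add_one t) hout
  exact (hL.2.1 _).not_gt (hdec.trans_le ((hmax ha).trans hb0.le))

end IsLyapunovFn

end Inclusions

lemma tendsto_infDist_zero_of_forall_mapClusterPt_mem {β X : Type*} [PseudoMetricSpace X]
    [ProperSpace X] {l : Filter β} {x : β → X} {S : Set X} (hx : Bornology.IsBounded (range x))
    (hS : ∀ a, MapClusterPt a l x → a ∈ S) :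
    Tendsto (fun b => Metric.infDist (x b) S) l (𝓝 0) := by
  refine tendsto_order.2 ⟨fun c hc => Eventually.of_forall fun b =>
    hc.trans_le Metric.infDist_nonneg, fun ε hε => ?_⟩
  by_contra hfreq
  have hK : IsCompact (closure (range x) ∩ {a | ε ≤ Metric.infDist a S}) :=
    hx.isCompact_closure.inter_right
      (isClosed_le continuous_const (Metric.continuous_infDist_pt S))
  obtain ⟨a, ⟨-, (ha : ε ≤ Metric.infDist a S)⟩, hcluster⟩ := hK.exists_mapClusterPt_of_frequently
    ((not_eventually.1 hfreq).mono fun b hb => ⟨subset_closure (mem_range_self b), not_lt.1 hb⟩)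
  rw [Metric.infDist_zero_of_mem (hS a hcluster)] at ha
  exact ha.not_gt hε

section StepTime

/-- The time elapsed after the first `k` steps of sizes `α`. -/
def stepTime (α : ℕ → ℝ) (k : ℕ) : ℝ := ∑ i ∈ Finset.range k, α i

/-- The largest index `k` with `stepTime α k ≤ s`, that is, the step in progress at time `s`;
for nonnegative steps, it is `0` if `s` is negative or if all elapsed times are at most `s`. -/
noncomputable def stepIndex (α : ℕ → ℝ) (s : ℝ) : ℕ := sSup {k | stepTime α k ≤ s}

variable {α : ℕ → ℝ}

lemma stepTime_succ (α : ℕ → ℝ) (k : ℕ) : stepTime α (k + 1) = stepTime α k + α k :=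
  Finset.sum_range_succ _ _

lemma sum_Ico_eq_stepTime_sub (α : ℕ → ℝ) {k m : ℕ} (h : k ≤ m) :
    ∑ i ∈ Finset.Ico k m, α i = stepTime α m - stepTime α k :=
  Finset.sum_Ico_eq_sub _ h

lemma stepTime_mono (hα : ∀ k, 0 ≤ α k) : Monotone (stepTime α) :=
  monotone_nat_of_le_succ fun k => by rw [stepTime_succ]; linarith [hα k]

lemma bddAbove_setOf_stepTime_le (hτ : Tendsto (stepTime α) atTop atTop) (s : ℝ) :
    BddAbove {k | stepTime α k ≤ s} := by
  obtain ⟨N, hN⟩ := eventually_atTop.1 (hτ.eventually_gt_atTop s)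
  exact ⟨N, fun k hk => le_of_not_ge fun hNk => (hN k hNk).not_ge hk⟩

lemma le_stepIndex (hτ : Tendsto (stepTime α) atTop atTop) {k : ℕ} {s : ℝ}
    (h : stepTime α k ≤ s) : k ≤ stepIndex α s :=
  le_csSup (bddAbove_setOf_stepTime_le hτ s) h

lemma stepTime_stepIndex_le (hτ : Tendsto (stepTime α) atTop atTop) {s : ℝ} (hs : 0 ≤ s) :
    stepTime α (stepIndex α s) ≤ s :=
  Nat.sSup_mem ⟨0, by simpa [stepTime] using hs⟩ (bddAbove_setOf_stepTime_le hτ s)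

lemma lt_stepTime_stepIndex_add_one (hτ : Tendsto (stepTime α) atTop atTop) (s : ℝ) :
    s < stepTime α (stepIndex α s + 1) :=
  lt_of_not_ge fun h => (le_stepIndex hτ h).not_gt (Nat.lt_succ_self _)

lemma tendsto_stepIndex_atTop (hτ : Tendsto (stepTime α) atTop atTop) :
    Tendsto (stepIndex α) atTop atTop :=
  tendsto_atTop.2 fun k => (eventually_ge_atTop (stepTime α k)).mono fun _ => le_stepIndex hτ

lemma eventually_stepIndex_le_add (hτ : Tendsto (stepTime α) atTop atTop) {h : ℝ} (hh : 0 ≤ h) :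
    ∀ᶠ s in atTop, stepIndex α s ≤ stepIndex α (s + h) := by
  filter_upwards [eventually_ge_atTop 0] with s hs
  exact le_stepIndex hτ ((stepTime_stepIndex_le hτ hs).trans (by linarith))

lemma tendsto_stepTime_stepIndex_sub (hτ : Tendsto (stepTime α) atTop atTop)
    (hα : Tendsto α atTop (𝓝 0)) :
    Tendsto (fun s => stepTime α (stepIndex α s) - s) atTop (𝓝 0) := by
  have hlow : Tendsto (fun s => -α (stepIndex α s)) atTop (𝓝 0) := by
    simpa using (hα.comp (tendsto_stepIndex_atTop hτ)).neg
  refine tendsto_of_tendsto_of_tendsto_of_le_of_le' hlow tendsto_const_nhds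
    (Eventually.of_forall fun s => ?_) ?_
  · have := lt_stepTime_stepIndex_add_one hτ s
    rw [stepTime_succ] at this
    linarith
  · filter_upwards [eventually_ge_atTop 0] with s hs
    exact sub_nonpos.2 (stepTime_stepIndex_le hτ hs)

lemma tendsto_stepTime_stepIndex_add_sub (hτ : Tendsto (stepTime α) atTop atTop)
    (hα : Tendsto α atTop (𝓝 0)) (h : ℝ) :
    Tendsto (fun s => stepTime α (stepIndex α (s + h)) - stepTime α (stepIndex α s)) atTop
      (𝓝 h) := by
  have hlim := (((tendsto_stepTime_stepIndex_sub hτ hα).comp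
    (tendsto_atTop_add_const_right atTop h tendsto_id)).sub
      (tendsto_stepTime_stepIndex_sub hτ hα)).add_const h
  rw [sub_zero, zero_add] at hlim
  exact hlim.congr fun s => by simp only [Function.comp_apply, id]; ring

end StepTime

/-- `w` is asymptotically negligible along the steps `α`: its weighted sums over windows of bounded
elapsed time tend to zero uniformly (the Kushner–Clark condition). -/
def IsNegligibleNoise {E : Type*} [NormedAddCommGroup E] [NormedSpace ℝ E] (α : ℕ → ℝ)
    (w : ℕ → E) : Prop :=
  ∀ T ε : ℝ, 0 < ε → ∀ᶠ k in atTop, ∀ m, k ≤ m → stepTime α m - stepTime α k ≤ T →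
    ‖∑ i ∈ Finset.Ico k m, α i • w i‖ ≤ ε

/-- A bounded Euler scheme `x` for the differential inclusion `∂_t z_t ∈ H(z_t)` with vanishing
step sizes `α` of infinite total length, drifts `g` and asymptotically negligible perturbations
`w`. -/
structure IsPerturbedEuler {E : Type*} [NormedAddCommGroup E] [NormedSpace ℝ E] (H : E → Set E)
    (α : ℕ → ℝ) (x g w : ℕ → E) : Prop where
  step_nonneg : ∀ k, 0 ≤ α k
  step_tendsto : Tendsto α atTop (𝓝 0)
  time_tendsto : Tendsto (stepTime α) atTop atTop
  update : ∀ k, x (k + 1) = x k + α k • (g k + w k)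
  drift_mem : ∀ k, g k ∈ H (x k)
  bounded : Bornology.IsBounded (range x)
  noise : IsNegligibleNoise α w

lemma tendsto_map_add_of_forall_tendsto_add {G X : Type*} [AddSemigroup G] [TopologicalSpace X]
    {f z : G → X} {l : Filter G} (hz : ∀ t, Tendsto (fun s => f (s + t)) l (𝓝 (z t))) (t h : G) :
    Tendsto (fun s => f (s + h)) (l.map (· + t)) (𝓝 (z (t + h))) :=
  tendsto_map'_iff.2 (by simpa only [Function.comp_def, add_assoc] using hz (t + h))

namespace IsPerturbedEuler

section NormedSpace

variable {E : Type*} [NormedAddCommGroup E] [NormedSpace ℝ E] {H : E → Set E} {α : ℕ → ℝ}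
  {x g w : ℕ → E} {M : ℝ}

lemma sub_eq_sum (hx : IsPerturbedEuler H α x g w) {k m : ℕ} (h : k ≤ m) :
    x m - x k = ∑ i ∈ Finset.Ico k m, α i • g i + ∑ i ∈ Finset.Ico k m, α i • w i := by
  rw [← Finset.sum_add_distrib, ← Finset.sum_Ico_sub x h]
  refine Finset.sum_congr rfl fun i _ => ?_
  rw [hx.update i, add_sub_cancel_left, smul_add]

lemma norm_sum_drift_le (hx : IsPerturbedEuler H α x g w) (hM : ∀ k, ‖g k‖ ≤ M) {k m : ℕ}
    (h : k ≤ m) :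
    ‖∑ i ∈ Finset.Ico k m, α i • g i‖ ≤ M * (stepTime α m - stepTime α k) := by
  rw [← sum_Ico_eq_stepTime_sub α h, Finset.mul_sum]
  refine norm_sum_le_of_le _ fun i _ => ?_
  rw [norm_smul, Real.norm_of_nonneg (hx.step_nonneg i), mul_comm]
  exact mul_le_mul_of_nonneg_right (hM i) (hx.step_nonneg i)

lemma eventually_norm_sub_le (hx : IsPerturbedEuler H α x g w) (hM : ∀ k, ‖g k‖ ≤ M) (T : ℝ)
    {ε : ℝ} (hε : 0 < ε) :
    ∀ᶠ k in atTop, ∀ m, k ≤ m → stepTime α m - stepTime α k ≤ T →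
      ‖x m - x k‖ ≤ M * (stepTime α m - stepTime α k) + ε := by
  filter_upwards [hx.noise T ε hε] with k hk m hkm hT
  rw [hx.sub_eq_sum hkm]
  exact (norm_add_le _ _).trans (add_le_add (hx.norm_sum_drift_le hM hkm) (hk m hkm hT))

lemma eventually_norm_sub_stepIndex_le (hx : IsPerturbedEuler H α x g w) (hM : ∀ k, ‖g k‖ ≤ M)
    {h c : ℝ} (hc : M * h < c) :
    ∀ᶠ s in atTop, ∀ m, stepIndex α s ≤ m → m ≤ stepIndex α (s + h) →
      ‖x m - x (stepIndex α s)‖ ≤ c := by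
  have hM0 : 0 ≤ M := (norm_nonneg _).trans (hM 0)
  have hwindow := tendsto_stepTime_stepIndex_add_sub hx.time_tendsto hx.step_tendsto h
  obtain ⟨ε, hε, hεc⟩ : ∃ ε > 0, M * (h + ε) + ε < c := by
    refine ⟨(c - M * h) / (2 * (M + 1)), by have := sub_pos.2 hc; positivity, ?_⟩
    have : M * h + (M + 1) * ((c - M * h) / (2 * (M + 1))) < c := by
      field_simp
      linarith
    linarith
  filter_upwards [(tendsto_stepIndex_atTop hx.time_tendsto).eventually
    (hx.eventually_norm_sub_le hM (h + ε) hε),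
    hwindow.eventually_le_const (lt_add_of_pos_right h hε)] with s hnear hlen m hsm hms
  have hm : stepTime α m - stepTime α (stepIndex α s) ≤ h + ε :=
    (sub_le_sub_right (stepTime_mono hx.step_nonneg hms) _).trans hlen
  exact (hnear m hsm hm).trans (le_trans (by gcongr) hεc.le)

lemma tendsto_sum_noise (hx : IsPerturbedEuler H α x g w) {h : ℝ} (hh : 0 ≤ h) :
    Tendsto (fun s => ∑ i ∈ Finset.Ico (stepIndex α s) (stepIndex α (s + h)), α i • w i) atTop
      (𝓝 0) := by
  have hwindow := tendsto_stepTime_stepIndex_add_sub hx.time_tendsto hx.step_tendsto h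
  refine Metric.nhds_basis_closedBall.tendsto_right_iff.2 fun ε hε => ?_
  filter_upwards [(tendsto_stepIndex_atTop hx.time_tendsto).eventually (hx.noise (h + 1) ε hε),
    hwindow.eventually_le_const (lt_add_one h), eventually_stepIndex_le_add hx.time_tendsto hh]
    with s hnoise hlen hle
  exact mem_closedBall_zero_iff.2 (hnoise _ hle hlen)

section Limits

variable {l : Filter ℝ} {h : ℝ} {y y' : E}

lemma norm_sub_le_of_tendsto [l.NeBot] (hx : IsPerturbedEuler H α x g w)
    (hM : ∀ k, ‖g k‖ ≤ M) (hl : l ≤ atTop) (hh : 0 ≤ h)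
    (hy : Tendsto (fun s => x (stepIndex α s)) l (𝓝 y))
    (hy' : Tendsto (fun s => x (stepIndex α (s + h))) l (𝓝 y')) :
    ‖y' - y‖ ≤ M * h := by
  refine le_of_forall_gt_imp_ge_of_dense fun c hc => le_of_tendsto (hy'.sub hy).norm ?_
  filter_upwards [hl (hx.eventually_norm_sub_stepIndex_le hM hc),
    hl (eventually_stepIndex_le_add hx.time_tendsto hh)] with s hs hle
  exact hs _ hle le_rfl

lemma tendsto_centerMass_drift (hx : IsPerturbedEuler H α x g w) (hl : l ≤ atTop) (hh : 0 < h)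
    (hy : Tendsto (fun s => x (stepIndex α s)) l (𝓝 y))
    (hy' : Tendsto (fun s => x (stepIndex α (s + h))) l (𝓝 y')) :
    Tendsto (fun s => (Finset.Ico (stepIndex α s) (stepIndex α (s + h))).centerMass α g) l
      (𝓝 (h⁻¹ • (y' - y))) := by
  have hwindow := tendsto_stepTime_stepIndex_add_sub hx.time_tendsto hx.step_tendsto h
  have hlim := ((hwindow.mono_left hl).inv₀ hh.ne').smul
    ((hy'.sub hy).sub ((hx.tendsto_sum_noise hh.le).mono_left hl))
  rw [sub_zero] at hlim
  refine hlim.congr' ?_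
  filter_upwards [hl (eventually_stepIndex_le_add hx.time_tendsto hh.le)] with s hle
  rw [Finset.centerMass, sum_Ico_eq_stepTime_sub α hle, hx.sub_eq_sum hle, add_sub_cancel_right]

lemma smul_sub_mem_of_tendsto [l.NeBot] (hx : IsPerturbedEuler H α x g w)
    (hM : ∀ k, ‖g k‖ ≤ M) (hl : l ≤ atTop) (hh : 0 < h)
    (hy : Tendsto (fun s => x (stepIndex α s)) l (𝓝 y))
    (hy' : Tendsto (fun s => x (stepIndex α (s + h))) l (𝓝 y'))
    {S : Set E} (hS : IsClosed S) (hSconv : Convex ℝ S) {δ : ℝ} (hδ : M * h < δ)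
    (hHS : ∀ v ∈ Metric.ball y δ, H v ⊆ S) : h⁻¹ • (y' - y) ∈ S := by
  obtain ⟨c, hMc, hcδ⟩ := exists_between hδ
  have hwindow := tendsto_stepTime_stepIndex_add_sub hx.time_tendsto hx.step_tendsto h
  refine hS.mem_of_tendsto (hx.tendsto_centerMass_drift hl hh hy hy') ?_
  filter_upwards [hl (eventually_stepIndex_le_add hx.time_tendsto hh.le),
    hl (hwindow.eventually_const_lt hh), hl (hx.eventually_norm_sub_stepIndex_le hM hMc),
    hy (Metric.ball_mem_nhds y (sub_pos.2 hcδ))] with s hle hpos hnear hsy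
  refine hSconv.centerMass_mem (fun i _ => hx.step_nonneg i)
    ((sum_Ico_eq_stepTime_sub α hle).symm ▸ hpos) fun i hi => ?_
  obtain ⟨hsi, his⟩ := Finset.mem_Ico.1 hi
  refine hHS (x i) ?_ (hx.drift_mem i)
  calc dist (x i) y ≤ dist (x i) (x (stepIndex α s)) + dist (x (stepIndex α s)) y :=
        dist_triangle _ _ _
    _ < c + (δ - c) := add_lt_add_of_le_of_lt (by rw [dist_eq_norm]; exact hnear i hsi his.le) hsy
    _ = δ := add_sub_cancel _ _

end Limits

lemma apply_stepIndex_stepTime (hx : IsPerturbedEuler H α x g w) (k : ℕ) :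
    x (stepIndex α (stepTime α k)) = x k := by
  have hle : k ≤ stepIndex α (stepTime α k) := le_stepIndex hx.time_tendsto le_rfl
  have htime : ∑ i ∈ Finset.Ico k (stepIndex α (stepTime α k)), α i = 0 := by
    rw [sum_Ico_eq_stepTime_sub α hle, sub_eq_zero]
    exact (stepTime_stepIndex_le hx.time_tendsto
      (Finset.sum_nonneg fun i _ => hx.step_nonneg i)).antisymm (stepTime_mono hx.step_nonneg hle)
  have hstep := (Finset.sum_eq_zero_iff_of_nonneg fun i _ => hx.step_nonneg i).1 htime
  rw [← sub_eq_zero, ← Finset.sum_Ico_sub x hle]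
  refine Finset.sum_eq_zero fun i hi => ?_
  rw [hx.update, hstep i hi, zero_smul, add_zero, sub_self]

section LimitPath

variable {l : Filter ℝ} {z : ℝ → E}

lemma lipschitzWith_of_tendsto [l.NeBot] {M : NNReal} (hx : IsPerturbedEuler H α x g w)
    (hM : ∀ k, ‖g k‖ ≤ M) (hl : l ≤ atTop)
    (hz : ∀ t, Tendsto (fun s => x (stepIndex α (s + t))) l (𝓝 (z t))) : LipschitzWith M z := by
  have hforward : ∀ t h, 0 ≤ h → ‖z (t + h) - z t‖ ≤ M * h := fun t h hh =>
    hx.norm_sub_le_of_tendsto (l := l.map (· + t)) hM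
      ((tendsto_atTop_add_const_right atTop t tendsto_id).mono_left hl) hh
      (tendsto_map'_iff.2 (hz t))
      (tendsto_map_add_of_forall_tendsto_add (f := x ∘ stepIndex α) hz t h)
  refine LipschitzWith.of_dist_le_mul fun t t' => ?_
  wlog htt : t ≤ t' generalizing t t'
  · rw [dist_comm, dist_comm t]
    exact this t' t (le_of_not_ge htt)
  · rw [dist_comm, dist_eq_norm, dist_comm, Real.dist_eq, abs_of_nonneg (sub_nonneg.2 htt)]
    simpa using hforward t (t' - t) (sub_nonneg.2 htt)

lemma mem_of_hasDerivAt [l.NeBot] (hx : IsPerturbedEuler H α x g w) {M : ℝ}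
    (hM : ∀ k, ‖g k‖ ≤ M) (hl : l ≤ atTop)
    (hz : ∀ t, Tendsto (fun s => x (stepIndex α (s + t))) l (𝓝 (z t)))
    {t : ℝ} {v : E} (hv : HasDerivAt z v t)
    {S : Set E} (hS : IsClosed S) (hSconv : Convex ℝ S) (hHS : ∀ᶠ y in 𝓝 (z t), H y ⊆ S) :
    v ∈ S := by
  obtain ⟨δ, hδ, hball⟩ := Metric.eventually_nhds_iff_ball.1 hHS
  have hsmall : Tendsto (fun h : ℝ => M * h) (𝓝[>] 0) (𝓝 0) := by
    simpa using
      ((tendsto_id (x := 𝓝 (0 : ℝ))).mono_left nhdsWithin_le_nhds).const_mul M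
  refine hS.mem_of_tendsto hv.tendsto_slope_zero_right ?_
  filter_upwards [self_mem_nhdsWithin, hsmall.eventually_lt_const hδ] with h hh hhδ
  exact hx.smul_sub_mem_of_tendsto (l := l.map (· + t)) hM
    ((tendsto_atTop_add_const_right atTop t tendsto_id).mono_left hl) hh
    (tendsto_map'_iff.2 (hz t))
    (tendsto_map_add_of_forall_tendsto_add (f := x ∘ stepIndex α) hz t h) hS hSconv hhδ hball

end LimitPath

lemma exists_tendsto_ultrafilter [ProperSpace E] (hx : IsPerturbedEuler H α x g w)
    (U : Ultrafilter ℝ) :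
    ∃ z : ℝ → E, ∀ t, Tendsto (fun s => x (stepIndex α (s + t))) U (𝓝 (z t)) := by
  have hlim : ∀ t, ∃ a, Tendsto (fun s => x (stepIndex α (s + t))) U (𝓝 a) := fun t => by
    obtain ⟨a, -, ha⟩ := hx.bounded.isCompact_closure.ultrafilter_le_nhds
      (U.map fun s => x (stepIndex α (s + t)))
      (le_principal_iff.2 (Eventually.of_forall (f := (U : Filter ℝ)) fun _ =>
        subset_closure (mem_range_self _)))
    exact ⟨a, ha⟩
  exact ⟨fun t => (hlim t).choose, fun t => (hlim t).choose_spec⟩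

end NormedSpace

section Inclusion

variable {n : ℕ} {H : (Fin n → ℝ) → Set (Fin n → ℝ)} {α : ℕ → ℝ} {x g w : ℕ → Fin n → ℝ}

lemma exists_norm_drift_le (hH : IsMarchaud H) (hx : IsPerturbedEuler H α x g w) :
    ∃ M : NNReal, ∀ k, ‖g k‖ ≤ M := by
  obtain ⟨-, -, C, hC, hgrowth⟩ := hH
  obtain ⟨B, hB⟩ := hx.bounded.exists_norm_le
  refine ⟨(C * (1 + B)).toNNReal, fun k => ?_⟩
  calc ‖g k‖ ≤ C * (1 + ‖x k‖) := hgrowth _ _ (hx.drift_mem k)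
    _ ≤ C * (1 + B) := by gcongr; exact hB _ (mem_range_self k)
    _ ≤ (C * (1 + B)).toNNReal := Real.le_coe_toNNReal _

theorem isDISolution_of_tendsto (hH : IsMarchaud H) (hx : IsPerturbedEuler H α x g w)
    {l : Filter ℝ} [l.NeBot] (hl : l ≤ atTop) {z : ℝ → Fin n → ℝ}
    (hz : ∀ t, Tendsto (fun s => x (stepIndex α (s + t))) l (𝓝 (z t))) : IsDISolution H z := by
  obtain ⟨M, hM⟩ := hx.exists_norm_drift_le hH
  refine IsDISolution.of_lipschitzWith (hx.lipschitzWith_of_tendsto hM hl hz) fun t v hv =>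
    hH.mem_of_forall_mem_cthickening fun ε hε => ?_
  exact hx.mem_of_hasDerivAt hM hl hz hv Metric.isClosed_cthickening
    ((hH.convex (z t)).cthickening ε) (hH.eventually_subset_cthickening (z t) hε)

theorem exists_isDISolution_of_mapClusterPt (hH : IsMarchaud H)
    (hx : IsPerturbedEuler H α x g w) {a : Fin n → ℝ} (ha : MapClusterPt a atTop x) (t : ℝ) :
    ∃ z, IsDISolution H z ∧ MapClusterPt (z 0) atTop x ∧ z t = a := by
  obtain ⟨U, hU, hUa⟩ := mapClusterPt_iff_ultrafilter.1 ha
  have hstart : (U.map fun k => stepTime α k - t : Filter ℝ) ≤ atTop :=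
    (tendsto_atTop_add_const_right atTop (-t) hx.time_tendsto).mono_left hU
  obtain ⟨z, hz⟩ := hx.exists_tendsto_ultrafilter (U.map fun k => stepTime α k - t)
  refine ⟨z, hx.isDISolution_of_tendsto hH hstart hz, ?_, ?_⟩
  · have h0 : Tendsto (x ∘ stepIndex α) (U.map fun k => stepTime α k - t) (𝓝 (z 0)) := by
      simpa only [Function.comp_def, add_zero] using hz 0
    exact MapClusterPt.of_comp ((tendsto_stepIndex_atTop hx.time_tendsto).mono_left hstart)
      h0.mapClusterPt
  · refine tendsto_nhds_unique (tendsto_map'_iff.1 (hz t)) ?_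
    simpa only [Function.comp_def, sub_add_cancel, hx.apply_stepIndex_stepTime] using hUa

theorem tendsto_infDist (hH : IsMarchaud H) (hx : IsPerturbedEuler H α x g w)
    {Λ : Set (Fin n → ℝ)} {L : (Fin n → ℝ) → ℝ} (hL : IsLyapunovFn H Λ L) :
    Tendsto (fun k => Metric.infDist (x k) Λ) atTop (𝓝 0) := by
  have hcompact : IsCompact {a | MapClusterPt a atTop x} :=
    hx.bounded.isCompact_closure.of_isClosed_subset isClosed_setOfPred_clusterPt fun a ha =>
      isClosed_closure.mem_of_mapClusterPt ha
        (Eventually.of_forall fun k => subset_closure (mem_range_self k))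
  refine tendsto_infDist_zero_of_forall_mapClusterPt_mem hx.bounded
    (hL.subset_of_isCompact hcompact fun a ha => ?_)
  obtain ⟨z, hz, hz0, hz1⟩ := hx.exists_isDISolution_of_mapClusterPt hH ha 1
  exact ⟨z, 1, one_pos, hz, hz0, hz1⟩

end Inclusion

end IsPerturbedEuler

lemma eventually_forall_ge_le_div_log {α : ℕ → ℝ}
    (hαlog : α =o[atTop] fun k : ℕ => 1 / Real.log k) {η : ℝ} (hη : 0 < η) :
    ∀ᶠ k : ℕ in atTop, ∀ i, k ≤ i → α i ≤ η / Real.log k := by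
  filter_upwards [eventually_forall_ge_atTop.2 (hαlog.def hη), eventually_gt_atTop 1]
    with k hk hk1 i hi
  have hlog : 0 < Real.log k := Real.log_pos (by exact_mod_cast hk1)
  have hle : Real.log k ≤ Real.log i :=
    Real.log_le_log (by exact_mod_cast zero_lt_one.trans hk1) (by exact_mod_cast hi)
  calc α i ≤ ‖α i‖ := Real.le_norm_self _
    _ ≤ η * ‖1 / Real.log i‖ := hk i hi
    _ = η / Real.log i := by
        rw [Real.norm_of_nonneg (one_div_nonneg.2 (hlog.trans_le hle).le), mul_one_div]
    _ ≤ η / Real.log k := by gcongr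

section MartingaleDifferences

variable {Ω E : Type*} {m0 : MeasurableSpace Ω} {μ : Measure Ω} {ℱ : Filtration ℕ m0}
  [NormedAddCommGroup E] [NormedSpace ℝ E]

/-- `y` is a martingale difference sequence for the filtration `ℱ`, almost surely bounded by the
deterministic sequence `c`. The indexing is that of increments: `y i` is known at time `i + 1`. -/
structure IsBoundedMartingaleDiff (y : ℕ → Ω → E) (c : ℕ → ℝ) (ℱ : Filtration ℕ m0)
    (μ : Measure Ω) : Prop where
  stronglyMeasurable : ∀ i, StronglyMeasurable[ℱ (i + 1)] (y i)
  norm_le : ∀ i, ∀ᵐ ω ∂μ, ‖y i ω‖ ≤ c i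
  condExp_eq_zero : ∀ i, μ[y i | ℱ i] =ᵐ[μ] 0

/-- The exponentials of the partial sums of `y`. -/
noncomputable def expPartialSum (y : ℕ → Ω → ℝ) (m : ℕ) (ω : Ω) : ℝ :=
  Real.exp (∑ i ∈ Finset.range m, y i ω)

lemma expPartialSum_pos (y : ℕ → Ω → ℝ) (m : ℕ) (ω : Ω) : 0 < expPartialSum y m ω :=
  Real.exp_pos _

lemma expPartialSum_succ (y : ℕ → Ω → ℝ) (m : ℕ) (ω : Ω) :
    expPartialSum y (m + 1) ω = expPartialSum y m ω * Real.exp (y m ω) := by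
  rw [expPartialSum, Finset.sum_range_succ, Real.exp_add, expPartialSum]

lemma sum_range_indicator_Ici {β : Type*} [AddCommMonoid β] (f : ℕ → β) (k m : ℕ) :
    ∑ i ∈ Finset.range m, (Ici k).indicator f i = ∑ i ∈ Finset.Ico k m, f i := by
  classical
  simp only [indicator_apply, ← Finset.sum_filter]
  congr 1
  ext i
  simp only [Finset.mem_filter, Finset.mem_range, mem_Ici, Finset.mem_Ico, and_comm]

namespace IsBoundedMartingaleDiff

section Basic

variable {y : ℕ → Ω → E} {c : ℕ → ℝ}

lemma integrable [IsFiniteMeasure μ] (hy : IsBoundedMartingaleDiff y c ℱ μ) (i : ℕ) :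
    Integrable (y i) μ :=
  .of_bound ((hy.stronglyMeasurable i).mono (ℱ.le _)).aestronglyMeasurable (c i) (hy.norm_le i)

lemma const_smul [CompleteSpace E] (hy : IsBoundedMartingaleDiff y c ℱ μ) (a : ℕ → ℝ) :
    IsBoundedMartingaleDiff (fun i => a i • y i) (fun i => |a i| * c i) ℱ μ where
  stronglyMeasurable i := (hy.stronglyMeasurable i).const_smul (a i)
  norm_le i := by
    filter_upwards [hy.norm_le i] with ω hω
    rw [Pi.smul_apply, norm_smul, Real.norm_eq_abs]
    gcongr
  condExp_eq_zero i := by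
    filter_upwards [condExp_smul (μ := μ) (a i) (y i) (ℱ i), hy.condExp_eq_zero i] with ω h h0
    rw [h, Pi.smul_apply, h0, Pi.zero_apply, smul_zero]

lemma indicator (hy : IsBoundedMartingaleDiff y c ℱ μ) (s : Set ℕ) :
    IsBoundedMartingaleDiff (s.indicator y) (s.indicator c) ℱ μ := by
  classical
  refine ⟨fun i => ?_, fun i => ?_, fun i => ?_⟩ <;> by_cases hi : i ∈ s
  · simpa only [indicator_of_mem hi] using hy.stronglyMeasurable i
  · simpa only [indicator_of_notMem hi] using stronglyMeasurable_zero
  · simpa only [indicator_of_mem hi] using hy.norm_le i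
  · simp [indicator_of_notMem hi]
  · simpa only [indicator_of_mem hi] using hy.condExp_eq_zero i
  · simp only [indicator_of_notMem hi, condExp_zero, EventuallyEq.rfl]

lemma eval [IsFiniteMeasure μ] {ι : Type*} [Fintype ι] {y : ℕ → Ω → ι → ℝ}
    (hy : IsBoundedMartingaleDiff y c ℱ μ) (j : ι) :
    IsBoundedMartingaleDiff (fun i ω => y i ω j) c ℱ μ where
  stronglyMeasurable i := (continuous_apply j).comp_stronglyMeasurable (hy.stronglyMeasurable i)
  norm_le i := (hy.norm_le i).mono fun ω hω => (norm_le_pi_norm (y i ω) j).trans hω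
  condExp_eq_zero i := by
    filter_upwards [(ContinuousLinearMap.proj (R := ℝ) (φ := fun _ : ι => ℝ) j).comp_condExp_comm
      (m := ℱ i) (hy.integrable i), hy.condExp_eq_zero i] with ω hcomm h0
    refine hcomm.symm.trans ?_
    rw [Function.comp_apply, h0, Pi.zero_apply, map_zero, Pi.zero_apply]

lemma sub_condExp [CompleteSpace E] [IsFiniteMeasure μ] {D : ℝ}
    (hmeas : ∀ i, StronglyMeasurable[ℱ (i + 1)] (y i)) (hD : ∀ i, ∀ᵐ ω ∂μ, ‖y i ω‖ ≤ D) :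
    IsBoundedMartingaleDiff (fun i => y i - μ[y i | ℱ i]) (fun _ => D + D) ℱ μ where
  stronglyMeasurable i :=
    (hmeas i).sub (stronglyMeasurable_condExp.mono (ℱ.mono i.le_succ))
  norm_le i := by
    have hint : Integrable (y i) μ :=
      .of_bound ((hmeas i).mono (ℱ.le _)).aestronglyMeasurable D (hD i)
    filter_upwards [hD i, Convex.condExp_mem (ℱ.le i) hint Metric.isClosed_closedBall
      (convex_closedBall (0 : E) D) ((hD i).mono fun _ => mem_closedBall_zero_iff.2)]
      with ω hω hcond
    exact norm_sub_le_of_le hω (mem_closedBall_zero_iff.1 hcond)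
  condExp_eq_zero i := by
    have hint : Integrable (y i) μ :=
      .of_bound ((hmeas i).mono (ℱ.le _)).aestronglyMeasurable D (hD i)
    filter_upwards [condExp_sub hint (integrable_condExp (m := ℱ i) (f := y i)) (ℱ i)] with ω hω
    rw [hω, condExp_of_stronglyMeasurable (ℱ.le i) stronglyMeasurable_condExp
      integrable_condExp, sub_self]

end Basic

section Exponential

variable {y : ℕ → Ω → ℝ} {c : ℕ → ℝ}

lemma stronglyMeasurable_expPartialSum (hy : IsBoundedMartingaleDiff y c ℱ μ) (m : ℕ) :
    StronglyMeasurable[ℱ m] (expPartialSum y m) :=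
  Real.continuous_exp.comp_stronglyMeasurable <|
    Finset.stronglyMeasurable_fun_sum _ fun i hi =>
      (hy.stronglyMeasurable i).mono (ℱ.mono (Nat.succ_le_of_lt (Finset.mem_range.1 hi)))

lemma norm_expPartialSum_le (hy : IsBoundedMartingaleDiff y c ℱ μ) (m : ℕ) :
    ∀ᵐ ω ∂μ, ‖expPartialSum y m ω‖ ≤ Real.exp (∑ i ∈ Finset.range m, c i) := by
  filter_upwards [ae_all_iff.2 hy.norm_le] with ω hω
  rw [Real.norm_of_nonneg (expPartialSum_pos y m ω).le, expPartialSum, Real.exp_le_exp]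
  exact Finset.sum_le_sum fun i _ => (le_abs_self _).trans (hω i)

variable [IsFiniteMeasure μ]

lemma integrable_expPartialSum (hy : IsBoundedMartingaleDiff y c ℱ μ) (m : ℕ) :
    Integrable (expPartialSum y m) μ :=
  .of_bound ((hy.stronglyMeasurable_expPartialSum m).mono (ℱ.le m)).aestronglyMeasurable _
    (hy.norm_expPartialSum_le m)

lemma integrable_expPartialSum_mul (hy : IsBoundedMartingaleDiff y c ℱ μ) (m : ℕ) :
    Integrable (expPartialSum y m * y m) μ :=
  (hy.integrable m).bdd_mul (hy.integrable_expPartialSum m).aestronglyMeasurable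
    (hy.norm_expPartialSum_le m)

lemma condExp_expPartialSum_mul (hy : IsBoundedMartingaleDiff y c ℱ μ) (m : ℕ) :
    μ[expPartialSum y m * y m | ℱ m] =ᵐ[μ] 0 := by
  filter_upwards [condExp_mul_of_stronglyMeasurable_left (hy.stronglyMeasurable_expPartialSum m)
    (hy.integrable_expPartialSum_mul m) (hy.integrable m), hy.condExp_eq_zero m] with ω hmul h0
  rw [hmul, Pi.mul_apply, h0, Pi.zero_apply, mul_zero]

lemma integral_expPartialSum_mul (hy : IsBoundedMartingaleDiff y c ℱ μ) (m : ℕ) :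
    ∫ ω, expPartialSum y m ω * y m ω ∂μ = 0 :=
  calc ∫ ω, expPartialSum y m ω * y m ω ∂μ
      = ∫ ω, (μ[expPartialSum y m * y m | ℱ m]) ω ∂μ := (integral_condExp (ℱ.le m)).symm
    _ = 0 := integral_eq_zero_of_ae (hy.condExp_expPartialSum_mul m)

lemma submartingale_expPartialSum (hy : IsBoundedMartingaleDiff y c ℱ μ) :
    Submartingale (expPartialSum y) ℱ μ := by
  refine submartingale_nat hy.stronglyMeasurable_expPartialSum hy.integrable_expPartialSum
    fun m => ?_
  have hS := hy.integrable_expPartialSum m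
  have hSy := hy.integrable_expPartialSum_mul m
  have hmono : μ[expPartialSum y m + expPartialSum y m * y m | ℱ m] ≤ᵐ[μ]
      μ[expPartialSum y (m + 1) | ℱ m] := by
    refine condExp_mono (hS.add hSy) (hy.integrable_expPartialSum (m + 1))
      (Eventually.of_forall fun ω => ?_)
    calc expPartialSum y m ω + expPartialSum y m ω * y m ω
        = expPartialSum y m ω * (y m ω + 1) := by ring
      _ ≤ expPartialSum y m ω * Real.exp (y m ω) :=
          mul_le_mul_of_nonneg_left (Real.add_one_le_exp _) (expPartialSum_pos y m ω).le
      _ = expPartialSum y (m + 1) ω := (expPartialSum_succ y m ω).symm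
  filter_upwards [hmono, condExp_add hS hSy (ℱ m), hy.condExp_expPartialSum_mul m]
    with ω hle hsum h0
  rwa [hsum, Pi.add_apply, h0, Pi.zero_apply, add_zero, condExp_of_stronglyMeasurable (ℱ.le m)
    (hy.stronglyMeasurable_expPartialSum m) hS] at hle

lemma integral_expPartialSum_succ_le (hy : IsBoundedMartingaleDiff y c ℱ μ) {m : ℕ}
    (hc : c m ≤ 1) :
    ∫ ω, expPartialSum y (m + 1) ω ∂μ ≤ (1 + c m ^ 2) * ∫ ω, expPartialSum y m ω ∂μ := by
  have hS := (hy.integrable_expPartialSum m).const_mul (1 + c m ^ 2)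
  have hSy := hy.integrable_expPartialSum_mul m
  calc ∫ ω, expPartialSum y (m + 1) ω ∂μ
      ≤ ∫ ω, (1 + c m ^ 2) * expPartialSum y m ω + expPartialSum y m ω * y m ω ∂μ := by
        refine integral_mono_ae (hy.integrable_expPartialSum (m + 1)) (hS.add hSy) ?_
        filter_upwards [hy.norm_le m] with ω hω
        have hexp := (abs_le.1 (Real.abs_exp_sub_one_sub_id_le (hω.trans hc))).2
        have hsq : y m ω ^ 2 ≤ c m ^ 2 := sq_le_sq' (abs_le.1 hω).1 (abs_le.1 hω).2
        calc expPartialSum y (m + 1) ω = expPartialSum y m ω * Real.exp (y m ω) :=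
              expPartialSum_succ y m ω
          _ ≤ expPartialSum y m ω * (1 + c m ^ 2 + y m ω) :=
              mul_le_mul_of_nonneg_left (by linarith) (expPartialSum_pos y m ω).le
          _ = (1 + c m ^ 2) * expPartialSum y m ω + expPartialSum y m ω * y m ω := by ring
    _ = (1 + c m ^ 2) * ∫ ω, expPartialSum y m ω ∂μ := by
        refine (integral_add hS hSy).trans ?_
        rw [integral_const_mul]
        exact add_eq_left.2 (hy.integral_expPartialSum_mul m)

lemma integral_expPartialSum_le (hy : IsBoundedMartingaleDiff y c ℱ μ) (hc : ∀ i, c i ≤ 1)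
    (m : ℕ) :
    ∫ ω, expPartialSum y m ω ∂μ ≤ Real.exp (∑ i ∈ Finset.range m, c i ^ 2) * μ.real univ := by
  induction m with
  | zero => simp [expPartialSum]
  | succ m ih =>
    calc ∫ ω, expPartialSum y (m + 1) ω ∂μ
        ≤ (1 + c m ^ 2) * ∫ ω, expPartialSum y m ω ∂μ :=
          hy.integral_expPartialSum_succ_le (hc m)
      _ ≤ Real.exp (c m ^ 2) * (Real.exp (∑ i ∈ Finset.range m, c i ^ 2) * μ.real univ) := by
          gcongr
          · exact integral_nonneg fun ω => (expPartialSum_pos y m ω).le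
          · rw [add_comm]
            exact Real.add_one_le_exp _
      _ = Real.exp (∑ i ∈ Finset.range (m + 1), c i ^ 2) * μ.real univ := by
          rw [Finset.sum_range_succ, Real.exp_add]
          ring

theorem measure_exists_le_sum_range_le (hy : IsBoundedMartingaleDiff y c ℱ μ)
    (hc : ∀ i, c i ≤ 1) (a : ℝ) (M : ℕ) :
    μ {ω | ∃ m ≤ M, a ≤ ∑ i ∈ Finset.range m, y i ω} ≤
      ENNReal.ofReal (Real.exp (-a + ∑ i ∈ Finset.range M, c i ^ 2)) * μ univ := by
  let Z := {ω | Real.exp a ≤ (Finset.range (M + 1)).sup' Finset.nonempty_range_add_one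
    fun m => expPartialSum y m ω}
  have hsub : {ω | ∃ m ≤ M, a ≤ ∑ i ∈ Finset.range m, y i ω} ⊆ Z := by
    rintro ω ⟨m, hm, ham⟩
    exact (Real.exp_le_exp.2 ham).trans
      (Finset.le_sup' (fun m => expPartialSum y m ω) (Finset.mem_range_succ_iff.2 hm))
  have hmax : ENNReal.ofReal (Real.exp a) * μ Z ≤
      ENNReal.ofReal (Real.exp (∑ i ∈ Finset.range M, c i ^ 2) * μ.real univ) := by
    have := maximal_ineq hy.submartingale_expPartialSum
      (fun m ω => (expPartialSum_pos y m ω).le) (ε := (Real.exp a).toNNReal) M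
    rw [Real.coe_toNNReal _ (Real.exp_pos a).le] at this
    refine this.trans (ENNReal.ofReal_le_ofReal ?_)
    exact (setIntegral_le_integral (hy.integrable_expPartialSum M)
      (Eventually.of_forall fun ω => (expPartialSum_pos y M ω).le)).trans
      (hy.integral_expPartialSum_le hc M)
  calc μ {ω | ∃ m ≤ M, a ≤ ∑ i ∈ Finset.range m, y i ω}
      ≤ μ Z := measure_mono hsub
    _ = ENNReal.ofReal (Real.exp (-a)) * (ENNReal.ofReal (Real.exp a) * μ Z) := by
        rw [← mul_assoc, ← ENNReal.ofReal_mul (Real.exp_pos _).le, ← Real.exp_add,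
          neg_add_cancel, Real.exp_zero, ENNReal.ofReal_one, one_mul]
    _ ≤ ENNReal.ofReal (Real.exp (-a)) *
          ENNReal.ofReal (Real.exp (∑ i ∈ Finset.range M, c i ^ 2) * μ.real univ) := by gcongr
    _ = ENNReal.ofReal (Real.exp (-a + ∑ i ∈ Finset.range M, c i ^ 2)) * μ univ := by
        rw [ENNReal.ofReal_mul (Real.exp_pos _).le, ofReal_measureReal, ← mul_assoc,
          ← ENNReal.ofReal_mul (Real.exp_pos _).le, ← Real.exp_add]

lemma measure_exists_le_sum_Ico_le (hy : IsBoundedMartingaleDiff y c ℱ μ) {k : ℕ}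
    (hc : ∀ i, k ≤ i → c i ≤ 1) (a : ℝ) (M : ℕ) :
    μ {ω | ∃ m ≤ M, a ≤ ∑ i ∈ Finset.Ico k m, y i ω} ≤
      ENNReal.ofReal (Real.exp (-a + ∑ i ∈ Finset.Ico k M, c i ^ 2)) * μ univ := by
  have hsum : ∀ m ω, ∑ i ∈ Finset.range m, (Ici k).indicator y i ω =
      ∑ i ∈ Finset.Ico k m, y i ω := fun m ω => by
    rw [← Finset.sum_apply, sum_range_indicator_Ici, Finset.sum_apply]
  have hsq : ∑ i ∈ Finset.range M, (Ici k).indicator c i ^ 2 =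
      ∑ i ∈ Finset.Ico k M, c i ^ 2 := by
    rw [← sum_range_indicator_Ici]
    refine Finset.sum_congr rfl fun i _ => ?_
    by_cases hi : i ∈ Ici k
    · simp only [indicator_of_mem hi]
    · simp only [indicator_of_notMem hi, ne_eq, OfNat.ofNat_ne_zero, not_false_eq_true, zero_pow]
  simpa only [hsum, hsq] using (hy.indicator (Ici k)).measure_exists_le_sum_range_le
    (indicator_le' (fun i hi => hc i hi) fun _ _ => zero_le_one) a M

lemma measure_exists_le_sum_mul_le {α : ℕ → ℝ} {D : ℝ}
    (hy : IsBoundedMartingaleDiff y (fun _ => D) ℱ μ) (hα : ∀ i, 0 ≤ α i) {k : ℕ} {A r : ℝ}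
    (hA : ∀ i, k ≤ i → α i ≤ A) (hr : 0 < r) (hrA : r * A * D ≤ 1) (hD : 0 ≤ D) (ε : ℝ) (M : ℕ) :
    μ {ω | ∃ m ≤ M, ε ≤ ∑ i ∈ Finset.Ico k m, α i * y i ω} ≤
      ENNReal.ofReal (Real.exp (-(r * ε) + r ^ 2 * D ^ 2 * A * ∑ i ∈ Finset.Ico k M, α i)) *
        μ univ := by
  have hmain := (hy.const_smul fun i => r * α i).measure_exists_le_sum_Ico_le (k := k)
    (fun i hi => ?_) (r * ε) M
  · refine (measure_mono ?_).trans (hmain.trans ?_)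
    · rintro ω ⟨m, hm, hsum⟩
      refine ⟨m, hm, (mul_le_mul_of_nonneg_left hsum hr.le).trans_eq ?_⟩
      simp only [Finset.mul_sum, Pi.smul_apply, smul_eq_mul, mul_assoc]
    · gcongr
      rw [Finset.mul_sum]
      refine Finset.sum_le_sum fun i hi => ?_
      calc (|r * α i| * D) ^ 2 = r ^ 2 * D ^ 2 * α i * α i := by
            rw [mul_pow, sq_abs]
            ring
        _ ≤ r ^ 2 * D ^ 2 * A * α i := by
            have := hα i
            gcongr
            exact hA i (Finset.mem_Ico.1 hi).1
  · rw [abs_of_nonneg (mul_nonneg hr.le (hα i))]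
    refine le_trans ?_ hrA
    gcongr
    exact hA i hi

end Exponential

section Noise

variable [IsFiniteMeasure μ] {α : ℕ → ℝ} {D : ℝ}

lemma eventually_measure_window_le {y : ℕ → Ω → ℝ}
    (hy : IsBoundedMartingaleDiff y (fun _ => D) ℱ μ) (hD : 0 ≤ D) (hα : ∀ k, 0 ≤ α k)
    (hτ : Tendsto (stepTime α) atTop atTop) (hαlog : α =o[atTop] fun k : ℕ => 1 / Real.log k)
    {T ε : ℝ} (hT : 0 ≤ T) (hε : 0 < ε) :
    ∀ᶠ k : ℕ in atTop, μ {ω | ∃ m, stepTime α m - stepTime α k ≤ T ∧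
        ε ≤ ∑ i ∈ Finset.Ico k m, α i * y i ω} ≤
      ENNReal.ofReal ((k : ℝ) ^ (-(3 / 2) : ℝ)) * μ univ := by
  obtain ⟨η, hη, hη₁, hη₂⟩ : ∃ η > 0, 2 * D * η ≤ ε ∧ 8 * D ^ 2 * T * η ≤ ε ^ 2 := by
    have hsmall : ∀ a b : ℝ, 0 < b → ∀ᶠ η in 𝓝[>] (0 : ℝ), a * η ≤ b := fun a b hb =>
      ((continuous_const_mul a).tendsto' 0 0 (mul_zero a)).mono_left nhdsWithin_le_nhds
        |>.eventually_le_const hb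
    exact (eventually_mem_nhdsWithin.and ((hsmall _ _ hε).and (hsmall _ _ (pow_pos hε 2)))).exists
  filter_upwards [eventually_forall_ge_le_div_log hαlog hη, eventually_gt_atTop 1] with k hk hk1
  have hkpos : (0 : ℝ) < k := by exact_mod_cast zero_lt_one.trans hk1
  have hlog : 0 < Real.log k := Real.log_pos (by exact_mod_cast hk1)
  have htime : 0 ≤ stepTime α k := Finset.sum_nonneg fun i _ => hα i
  have hwindow : ∑ i ∈ Finset.Ico k (stepIndex α (stepTime α k + T)), α i ≤ T := by
    rw [sum_Ico_eq_stepTime_sub α (le_stepIndex hτ (by linarith)), sub_le_iff_le_add']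
    exact stepTime_stepIndex_le hτ (by linarith)
  have hscale : 2 * Real.log k / ε * (η / Real.log k) * D ≤ 1 := by
    rw [show 2 * Real.log k / ε * (η / Real.log k) * D = 2 * D * η / ε by field_simp]
    exact (div_le_one hε).2 hη₁
  refine (measure_mono fun ω => ?_).trans ((hy.measure_exists_le_sum_mul_le hα hk
    (by positivity) hscale hD ε (stepIndex α (stepTime α k + T))).trans ?_)
  · rintro ⟨m, hm, hsum⟩
    exact ⟨m, le_stepIndex hτ (by linarith), hsum⟩
  · gcongr
    rw [Real.rpow_def_of_pos hkpos, Real.exp_le_exp]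
    calc -(2 * Real.log k / ε * ε) + (2 * Real.log k / ε) ^ 2 * D ^ 2 * (η / Real.log k) *
          ∑ i ∈ Finset.Ico k (stepIndex α (stepTime α k + T)), α i
        ≤ -(2 * Real.log k / ε * ε) + (2 * Real.log k / ε) ^ 2 * D ^ 2 * (η / Real.log k) * T := by
          gcongr
      _ = -(2 * Real.log k) + 8 * D ^ 2 * T * η / ε ^ 2 * (Real.log k / 2) := by
          field_simp
          ring
      _ ≤ -(2 * Real.log k) + 1 * (Real.log k / 2) := by
          gcongr
          exact (div_le_one (by positivity)).2 hη₂
      _ = Real.log k * -(3 / 2) := by ring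

lemma ae_eventually_window_lt {y : ℕ → Ω → ℝ}
    (hy : IsBoundedMartingaleDiff y (fun _ => D) ℱ μ) (hD : 0 ≤ D) (hα : ∀ k, 0 ≤ α k)
    (hτ : Tendsto (stepTime α) atTop atTop) (hαlog : α =o[atTop] fun k : ℕ => 1 / Real.log k)
    {T ε : ℝ} (hT : 0 ≤ T) (hε : 0 < ε) :
    ∀ᵐ ω ∂μ, ∀ᶠ k in atTop, ∀ m, stepTime α m - stepTime α k ≤ T →
      ∑ i ∈ Finset.Ico k m, α i * y i ω < ε := by
  obtain ⟨K, hK⟩ := eventually_atTop.1 (hy.eventually_measure_window_le hD hα hτ hαlog hT hε)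
  have hsum : ∑' k, μ {ω | ∃ m, stepTime α m - stepTime α (k + K) ≤ T ∧
      ε ≤ ∑ i ∈ Finset.Ico (k + K) m, α i * y i ω} ≠ ⊤ := by
    refine ne_top_of_le_ne_top ?_ (ENNReal.tsum_le_tsum fun k => hK (k + K) (Nat.le_add_left K k))
    rw [ENNReal.tsum_mul_right]
    exact ENNReal.mul_ne_top ((summable_nat_add_iff K).2
      (Real.summable_nat_rpow.2 (by norm_num))).tsum_ofReal_ne_top (measure_ne_top μ univ)
  filter_upwards [ae_eventually_notMem hsum] with ω hω
  rw [← map_add_atTop_eq_nat K, eventually_map]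
  filter_upwards [hω] with k hk m hm
  exact lt_of_not_ge fun hle => hk ⟨m, hm, hle⟩

lemma ae_isNegligibleNoise_real {y : ℕ → Ω → ℝ}
    (hy : IsBoundedMartingaleDiff y (fun _ => D) ℱ μ) (hD : 0 ≤ D) (hα : ∀ k, 0 ≤ α k)
    (hτ : Tendsto (stepTime α) atTop atTop) (hαlog : α =o[atTop] fun k : ℕ => 1 / Real.log k) :
    ∀ᵐ ω ∂μ, IsNegligibleNoise α fun i => y i ω := by
  have hneg : IsBoundedMartingaleDiff (fun i => (-1 : ℝ) • y i) (fun _ => D) ℱ μ := by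
    simpa only [abs_neg, abs_one, one_mul] using hy.const_smul fun _ => -1
  have hwindow : ∀ {x : ℕ → Ω → ℝ}, IsBoundedMartingaleDiff x (fun _ => D) ℱ μ →
      ∀ᵐ ω ∂μ, ∀ j l : ℕ, ∀ᶠ k in atTop, ∀ m, stepTime α m - stepTime α k ≤ j →
        ∑ i ∈ Finset.Ico k m, α i * x i ω < 1 / ((l : ℝ) + 1) := fun hx =>
    ae_all_iff.2 fun j => ae_all_iff.2 fun l =>
      hx.ae_eventually_window_lt hD hα hτ hαlog j.cast_nonneg Nat.one_div_pos_of_nat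
  filter_upwards [hwindow hy, hwindow hneg] with ω hupper hlower T ε hε
  obtain ⟨j, hj⟩ := exists_nat_ge T
  obtain ⟨l, hl⟩ := exists_nat_one_div_lt hε
  filter_upwards [hupper j l, hlower j l] with k hku hkl m _ hmT
  have hu := hku m (hmT.trans hj)
  have hl' := hkl m (hmT.trans hj)
  simp only [Pi.smul_apply, smul_eq_mul, neg_one_mul, mul_neg, Finset.sum_neg_distrib] at hl'
  simp only [smul_eq_mul, Real.norm_eq_abs]
  exact abs_le.2 ⟨by linarith, by linarith⟩

theorem ae_isNegligibleNoise {ι : Type*} [Fintype ι] {y : ℕ → Ω → ι → ℝ}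
    (hy : IsBoundedMartingaleDiff y (fun _ => D) ℱ μ) (hD : 0 ≤ D) (hα : ∀ k, 0 ≤ α k)
    (hτ : Tendsto (stepTime α) atTop atTop) (hαlog : α =o[atTop] fun k : ℕ => 1 / Real.log k) :
    ∀ᵐ ω ∂μ, IsNegligibleNoise α fun i => y i ω := by
  filter_upwards [ae_all_iff.2 fun j => (hy.eval j).ae_isNegligibleNoise_real hD hα hτ hαlog]
    with ω hω T ε hε
  filter_upwards [eventually_all.2 fun j => hω j T ε hε] with k hk m hkm hmT
  refine (pi_norm_le_iff_of_nonneg hε.le).2 fun j => ?_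
  simpa only [Finset.sum_apply, Pi.smul_apply] using hk j m hkm hmT

end Noise

end IsBoundedMartingaleDiff

end MartingaleDifferences

section ConditionalSelections

variable {Ω : Type*} {m m0 : MeasurableSpace Ω} {μ : Measure Ω} [IsFiniteMeasure μ]

lemma ae_condExp_mem_of_ae_mem_on {E : Type*} [NormedAddCommGroup E] [NormedSpace ℝ E]
    [CompleteSpace E] (hm : m ≤ m0) {f : Ω → E} (hf : Integrable f μ) {s : Set Ω}
    (hs : MeasurableSet[m] s) {S : Set E} (hS : IsClosed S) (hSconv : Convex ℝ S)
    (hmem : ∀ᵐ ω ∂μ, ω ∈ s → f ω ∈ S) : ∀ᵐ ω ∂μ, ω ∈ s → μ[f | m] ω ∈ S := by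
  refine (ae_restrict_iff' (hm s hs)).1 ?_
  filter_upwards [Convex.condExp_mem hm hf.restrict hS hSconv
    ((ae_restrict_iff' (hm s hs)).2 hmem), condExp_restrict_ae_eq_restrict hm hs hf] with ω hω heq
  rwa [heq] at hω

theorem IsMarchaud.condExp_mem {n : ℕ} {H : (Fin n → ℝ) → Set (Fin n → ℝ)} (hH : IsMarchaud H)
    (hm : m ≤ m0) {x f : Ω → Fin n → ℝ} (hx : Measurable[m] x) (hf : Integrable f μ) {s : Set Ω}
    (hs : MeasurableSet[m] s) (hmem : ∀ᵐ ω ∂μ, ω ∈ s → f ω ∈ H (x ω)) :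
    ∀ᵐ ω ∂μ, ω ∈ s → μ[f | m] ω ∈ H (x ω) := by
  have hcell : ∀ b ∈ TopologicalSpace.countableBasis (Fin n → ℝ), ∀ᵐ ω ∂μ,
      ω ∈ s ∩ x ⁻¹' b → μ[f | m] ω ∈ closedConvexHull ℝ (⋃ y ∈ b, H y) := fun b hb => by
    refine ae_condExp_mem_of_ae_mem_on hm hf
      (hs.inter (hx (TopologicalSpace.isOpen_of_mem_countableBasis hb).measurableSet))
      isClosed_closedConvexHull convex_closedConvexHull ?_
    filter_upwards [hmem] with ω hω hωb
    exact subset_closedConvexHull (mem_biUnion hωb.2 (hω hωb.1))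
  filter_upwards [(ae_ball_iff (TopologicalSpace.countable_countableBasis _)).2 hcell]
    with ω hω hωs
  refine hH.mem_of_forall_mem_cthickening fun ε hε => ?_
  obtain ⟨b, ⟨hb, hxb⟩, hbε⟩ := (TopologicalSpace.isBasis_countableBasis
    (Fin n → ℝ)).nhds_hasBasis.eventually_iff.1 (hH.eventually_subset_cthickening (x ω) hε)
  have hsub : ⋃ y ∈ b, H y ⊆ Metric.cthickening ε (H (x ω)) := iUnion₂_subset fun _ hy => hbε hy
  exact closedConvexHull_min hsub ((hH.convex (x ω)).cthickening ε) Metric.isClosed_cthickening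
    (hω b hb ⟨hωs, hxb⟩)

end ConditionalSelections

section StochasticApproximation

variable {n : ℕ} {H : (Fin n → ℝ) → Set (Fin n → ℝ)} {Ω : Type*} {m0 : MeasurableSpace Ω}
  {μ : Measure Ω} {ℱ : Filtration ℕ m0} {α : ℕ → ℝ} {C : ℝ} {θ g w : ℕ → Ω → Fin n → ℝ}

/-- The iterates `θ`, adapted to `ℱ`, follow the drifts `g`, selected from `H`, and the noise `w`,
conditionally centred and almost surely bounded by `C`, with step sizes `α`. Neither `g` nor `w` is
required to be adapted. -/
structure IsStochasticApproximation (H : (Fin n → ℝ) → Set (Fin n → ℝ)) (α : ℕ → ℝ) (C : ℝ)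
    (θ g w : ℕ → Ω → Fin n → ℝ) (ℱ : Filtration ℕ m0) (μ : Measure Ω) : Prop where
  step_nonneg : ∀ k, 0 ≤ α k
  step_not_summable : ¬ Summable α
  step_isLittleO : α =o[atTop] fun k : ℕ => 1 / Real.log k
  adapted : StronglyAdapted ℱ θ
  update : ∀ k ω, θ (k + 1) ω = θ k ω + α k • (g k ω + w k ω)
  drift_mem : ∀ k ω, g k ω ∈ H (θ k ω)
  noise_aestronglyMeasurable : ∀ k, AEStronglyMeasurable (w k) μ
  noise_norm_le : ∀ k, ∀ᵐ ω ∂μ, ‖w k ω‖ ≤ C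
  noise_condExp : ∀ k, μ[w k | ℱ k] =ᵐ[μ] 0

/-- The velocity of the step from `θ k` to `θ (k + 1)`, replaced by `0` outside the event
`‖θ k‖ ≤ R` so that it is bounded. It is also `0` when `α k = 0`. -/
noncomputable def truncatedVelocity {E : Type*} [NormedAddCommGroup E] [NormedSpace ℝ E]
    (α : ℕ → ℝ) (θ : ℕ → Ω → E) (R : ℝ) (k : ℕ) : Ω → E :=
  {ω | ‖θ k ω‖ ≤ R}.indicator fun ω => (α k)⁻¹ • (θ (k + 1) ω - θ k ω)

namespace IsStochasticApproximation

lemma tendsto_step (hθ : IsStochasticApproximation H α C θ g w ℱ μ) :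
    Tendsto α atTop (𝓝 0) :=
  hθ.step_isLittleO.trans_tendsto <| by
    simp only [one_div]
    exact (Real.tendsto_log_atTop.comp tendsto_natCast_atTop_atTop).inv_tendsto_atTop

lemma tendsto_stepTime (hθ : IsStochasticApproximation H α C θ g w ℱ μ) :
    Tendsto (stepTime α) atTop atTop :=
  (not_summable_iff_tendsto_nat_atTop_of_nonneg hθ.step_nonneg).1 hθ.step_not_summable

lemma measurableSet_norm_le (hθ : IsStochasticApproximation H α C θ g w ℱ μ) (R : ℝ) (k : ℕ) :
    MeasurableSet[ℱ k] {ω | ‖θ k ω‖ ≤ R} :=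
  (hθ.adapted k).norm.measurableSet_le stronglyMeasurable_const

lemma truncatedVelocity_eq (hθ : IsStochasticApproximation H α C θ g w ℱ μ) {R : ℝ} {k : ℕ}
    (hk : α k ≠ 0) {ω : Ω} (hω : ‖θ k ω‖ ≤ R) :
    truncatedVelocity α θ R k ω = g k ω + w k ω := by
  rw [truncatedVelocity, indicator_of_mem (show ω ∈ {ω | ‖θ k ω‖ ≤ R} from hω), hθ.update,
    add_sub_cancel_left, inv_smul_smul₀ hk]

lemma stronglyMeasurable_truncatedVelocity (hθ : IsStochasticApproximation H α C θ g w ℱ μ)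
    (R : ℝ) (k : ℕ) : StronglyMeasurable[ℱ (k + 1)] (truncatedVelocity α θ R k) :=
  (((hθ.adapted (k + 1)).sub ((hθ.adapted k).mono (ℱ.mono k.le_succ))).const_smul (α k)⁻¹).indicator
    (ℱ.mono k.le_succ _ (hθ.measurableSet_norm_le R k))

lemma exists_norm_truncatedVelocity_le (hθ : IsStochasticApproximation H α C θ g w ℱ μ)
    (hH : IsMarchaud H) (R : ℝ) :
    ∃ D, 0 ≤ D ∧ ∀ k, ∀ᵐ ω ∂μ, ‖truncatedVelocity α θ R k ω‖ ≤ D := by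
  obtain ⟨-, -, C', hC', hgrowth⟩ := hH
  have hD : 0 ≤ C' * (1 + |R|) + |C| := by positivity
  refine ⟨C' * (1 + |R|) + |C|, hD, fun k => ?_⟩
  filter_upwards [hθ.noise_norm_le k] with ω hω
  by_cases hR : ‖θ k ω‖ ≤ R
  · by_cases hk : α k = 0
    · simpa [truncatedVelocity, hk] using hD
    · rw [hθ.truncatedVelocity_eq hk hR]
      refine norm_add_le_of_le ((hgrowth _ _ (hθ.drift_mem k ω)).trans ?_)
        (hω.trans (le_abs_self C))
      gcongr
      exact hR.trans (le_abs_self R)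
  · simpa [truncatedVelocity, hR] using hD

variable [IsFiniteMeasure μ]

lemma condExp_truncatedVelocity_mem (hθ : IsStochasticApproximation H α C θ g w ℱ μ)
    (hH : IsMarchaud H) (R : ℝ) {k : ℕ} (hk : α k ≠ 0) :
    ∀ᵐ ω ∂μ, ‖θ k ω‖ ≤ R → μ[truncatedVelocity α θ R k | ℱ k] ω ∈ H (θ k ω) := by
  obtain ⟨D, -, hD⟩ := hθ.exists_norm_truncatedVelocity_le hH R
  have hs := hθ.measurableSet_norm_le R k
  have hu : Integrable (truncatedVelocity α θ R k) μ :=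
    .of_bound ((hθ.stronglyMeasurable_truncatedVelocity R k).mono (ℱ.le _)).aestronglyMeasurable D
      (hD k)
  have hw : Integrable (w k) μ :=
    .of_bound (hθ.noise_aestronglyMeasurable k) C (hθ.noise_norm_le k)
  have hws : Integrable ({ω | ‖θ k ω‖ ≤ R}.indicator (w k)) μ := hw.indicator (ℱ.le k _ hs)
  have hmem := hH.condExp_mem (ℱ.le k) (hθ.adapted k).measurable (hu.sub hws) hs <|
    Eventually.of_forall fun ω hω => by
      rw [Pi.sub_apply, hθ.truncatedVelocity_eq hk hω, indicator_of_mem hω, add_sub_cancel_right]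
      exact hθ.drift_mem k ω
  filter_upwards [hmem, condExp_sub hu hws (ℱ k), condExp_indicator hw hs, hθ.noise_condExp k]
    with ω hω hsub hind h0 hR
  have hω' := hω hR
  rwa [hsub, Pi.sub_apply, hind, indicator_of_mem (show ω ∈ {ω | ‖θ k ω‖ ≤ R} from hR), h0,
    Pi.zero_apply, sub_zero] at hω'

theorem ae_exists_isPerturbedEuler (hθ : IsStochasticApproximation H α C θ g w ℱ μ)
    (hH : IsMarchaud H) (R : ℝ) :
    ∀ᵐ ω ∂μ, (∀ k, ‖θ k ω‖ ≤ R) →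
      ∃ v ξ : ℕ → Fin n → ℝ, IsPerturbedEuler H α (fun k => θ k ω) v ξ := by
  obtain ⟨D, hD0, hD⟩ := hθ.exists_norm_truncatedVelocity_le hH R
  have hnoise : ∀ᵐ ω ∂μ, IsNegligibleNoise α fun k =>
      (truncatedVelocity α θ R k - μ[truncatedVelocity α θ R k | ℱ k]) ω :=
    (IsBoundedMartingaleDiff.sub_condExp (hθ.stronglyMeasurable_truncatedVelocity R)
      hD).ae_isNegligibleNoise (add_nonneg hD0 hD0) hθ.step_nonneg hθ.tendsto_stepTime
      hθ.step_isLittleO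
  have hdrift : ∀ᵐ ω ∂μ, ∀ k, α k ≠ 0 → ‖θ k ω‖ ≤ R →
      μ[truncatedVelocity α θ R k | ℱ k] ω ∈ H (θ k ω) :=
    ae_all_iff.2 fun k => eventually_imp_distrib_left.2 fun hk =>
      hθ.condExp_truncatedVelocity_mem hH R hk
  filter_upwards [hnoise, hdrift] with ω hnoiseω hdriftω hR
  refine ⟨fun k => if α k = 0 then g k ω else μ[truncatedVelocity α θ R k | ℱ k] ω,
    fun k => (truncatedVelocity α θ R k - μ[truncatedVelocity α θ R k | ℱ k]) ω, ?_⟩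
  refine ⟨hθ.step_nonneg, hθ.tendsto_step, hθ.tendsto_stepTime, fun k => ?_, fun k => ?_,
    isBounded_iff_forall_norm_le.2 ⟨R, forall_mem_range.2 hR⟩, hnoiseω⟩
  · by_cases hk : α k = 0
    · rw [hθ.update, hk, zero_smul, zero_smul]
    · rw [if_neg hk, Pi.sub_apply, add_sub_cancel, hθ.truncatedVelocity_eq hk (hR k), hθ.update]
  · by_cases hk : α k = 0
    · simpa only [hk, if_true] using hθ.drift_mem k ω
    · simpa only [hk, if_false] using hdriftω k hk (hR k)

end IsStochasticApproximation

theorem stochastic_approximation_differential_inclusion_general [IsFiniteMeasure μ]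
    (hθ : IsStochasticApproximation H α C θ g w ℱ μ) (hH : IsMarchaud H)
    {Λ : Set (Fin n → ℝ)} {L : (Fin n → ℝ) → ℝ} (hL : IsLyapunovFn H Λ L) :
    ∀ᵐ ω ∂μ, (∃ B : ℝ, ∀ k, ‖θ k ω‖ ≤ B) →
      Tendsto (fun k => Metric.infDist (θ k ω) Λ) atTop (𝓝 0) := by
  filter_upwards [ae_all_iff.2 fun R : ℕ => hθ.ae_exists_isPerturbedEuler hH R]
    with ω hω ⟨B, hB⟩
  obtain ⟨R, hR⟩ := exists_nat_ge B
  obtain ⟨v, ξ, hEuler⟩ := hω R fun k => (hB k).trans hR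
  exact hEuler.tendsto_infDist hH hL

end StochasticApproximation

lemma filtration_natural_eq_comap_fin {Ω E : Type*} [MeasurableSpace Ω] [TopologicalSpace E]
    [TopologicalSpace.MetrizableSpace E] [MeasurableSpace E] [BorelSpace E] {x : ℕ → Ω → E}
    (hx : ∀ k, StronglyMeasurable (x k)) (k : ℕ) :
    Filtration.natural x hx k =
      MeasurableSpace.comap (fun ω (j : Fin (k + 1)) => x j ω) inferInstance := by
  have hprefix : (⨆ j : Fin (k + 1), MeasurableSpace.comap (x j) inferInstance) =
      ⨆ j ≤ k, MeasurableSpace.comap (x j) inferInstance :=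
    le_antisymm (iSup_le fun j => le_iSup₂_of_le j (Nat.le_of_lt_succ j.2) le_rfl)
      (iSup₂_le fun j hj => le_iSup_of_le (⟨j, Nat.lt_succ_of_le hj⟩ : Fin (k + 1)) le_rfl)
  rw [MeasurableSpace.comap_process_pi, hprefix]
  rfl

/-- Stochastic approximation of a differential inclusion with a Lyapunov
function: bounded iterates of a stochastic approximation scheme driven by a Marchaud map with
bounded martingale-difference noise converge almost surely to the set `Λ` on which a Lyapunov
function vanishes. -/
theorem stochastic_approximation_differential_inclusion
    {n : ℕ} (H : (Fin n → ℝ) → Set (Fin n → ℝ)) (hH : IsMarchaud H)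
    (Λ : Set (Fin n → ℝ)) (L : (Fin n → ℝ) → ℝ) (hL : IsLyapunovFn H Λ L)
    {Ω : Type*} [MeasurableSpace Ω] (μ : Measure Ω) [IsProbabilityMeasure μ]
    (θ g w : ℕ → Ω → Fin n → ℝ)
    (hθmeas : ∀ k, Measurable (θ k)) (hwmeas : ∀ k, Measurable (w k))
    (α : ℕ → ℝ) (hα0 : ∀ k, 0 ≤ α k) (hαsum : ¬ Summable α)
    (hαlog : α =o[Filter.atTop] fun k : ℕ => 1 / Real.log k)
    (hupd : ∀ k ω, θ (k + 1) ω = θ k ω + α k • (g k ω + w k ω))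
    (hg : ∀ k ω, g k ω ∈ H (θ k ω))
    (C : ℝ) (hwbdd : ∀ k, ∀ᵐ ω ∂μ, ‖w k ω‖ < C)
    (hmds : ∀ k, μ[w k |
      MeasurableSpace.comap (fun ω (j : Fin (k + 1)) => θ j ω) inferInstance] =ᵐ[μ] 0)
    (hbdd : ∀ᵐ ω ∂μ, ∃ B : ℝ, ∀ k, ‖θ k ω‖ ≤ B) :
    ∀ᵐ ω ∂μ, Filter.Tendsto (fun k => Metric.infDist (θ k ω) Λ)
      Filter.atTop (nhds 0) := by
  let ℱ := Filtration.natural θ fun k => (hθmeas k).stronglyMeasurable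
  have hθ : IsStochasticApproximation H α C θ g w ℱ μ :=
    { step_nonneg := hα0
      step_not_summable := hαsum
      step_isLittleO := hαlog
      adapted := Filtration.stronglyAdapted_natural _
      update := hupd
      drift_mem := hg
      noise_aestronglyMeasurable := fun k => (hwmeas k).aestronglyMeasurable
      noise_norm_le := fun k => (hwbdd k).mono fun _ => le_of_lt
      noise_condExp := fun k => by
        simpa only [ℱ, filtration_natural_eq_comap_fin] using hmds k }
  filter_upwards [stochastic_approximation_differential_inclusion_general hθ hH hL, hbdd]
    with ω hω hB using hω hB
end

section
/- Approximation quality of QDP fixed points: for any λ ∈ [0,1]^{X×[m]}, if all reward distributions of the MDP are supported on [R_min, R_max], then w̄_1(η̂^π_λ, η^π) ≤ (V_max − V_min) / (2m(1−γ)), where V_max = R_max/(1−γ), V_min = R_min/(1−γ), η^π is the true return-distribution function (the unique fixed point of T^π), and η̂^π_λ is the unique fixed point of Π^λ T^π in F_{Q,m}^X. -/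
open MeasureTheory ProbabilityTheory Set
open scoped ENNReal

/-- Generalized inverse CDF (least τ-quantile). -/
noncomputable def invCDF (ν : Measure ℝ) (τ : ℝ) : ℝ := sInf {y | τ ≤ cdf ν y}

/-- Upper inverse CDF (greatest τ-quantile). -/
noncomputable def upInvCDF (ν : Measure ℝ) (τ : ℝ) : ℝ := sInf {y | τ < cdf ν y}

/-- Quantile level τ_i = (2i-1)/(2m), with `i : Fin m` zero-indexed. -/
noncomputable def qlevel (m : ℕ) (i : Fin m) : ℝ := (2 * (i : ℝ) + 1) / (2 * m)

/-- The uniform m-atom distribution with the given particle locations. -/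
noncomputable def paramDistOne {m : ℕ} (θ : Fin m → ℝ) : Measure ℝ :=
  (m : ℝ≥0∞)⁻¹ • ∑ i : Fin m, Measure.dirac (θ i)

/-- Return-distribution function associated with quantile parameters θ. -/
noncomputable def paramDist {X : Type*} {m : ℕ} (θ : X → Fin m → ℝ) : X → Measure ℝ :=
  fun x => paramDistOne (θ x)

/-- The distributional Bellman operator T^π. -/
noncomputable def bellman {X : Type*} [MeasurableSpace X]
    (P : X → Measure (ℝ × X)) (γ : ℝ) (η : X → Measure ℝ) : X → Measure ℝ :=
  fun x => (P x).bind (fun p => (η p.2).map (fun z => p.1 + γ * z))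

/-- The quantile projection Π^λ, parameter-level output. -/
noncomputable def projParam {X : Type*} {m : ℕ} (lam : X → Fin m → ℝ)
    (η : X → Measure ℝ) : X → Fin m → ℝ :=
  fun x i => (1 - lam x i) * invCDF (η x) (qlevel m i) + lam x i * upInvCDF (η x) (qlevel m i)

/-- The quantile projection Π^λ on return-distribution functions. -/
noncomputable def proj {X : Type*} {m : ℕ} (lam : X → Fin m → ℝ)
    (η : X → Measure ℝ) : X → Measure ℝ :=
  paramDist (projParam lam η)

/-- The projected distributional Bellman operator Π^λ T^π acting on parameters. -/
noncomputable def projBellmanParam {X : Type*} [MeasurableSpace X]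
    (P : X → Measure (ℝ × X)) (γ : ℝ) {m : ℕ} (lam : X → Fin m → ℝ)
    (θ : X → Fin m → ℝ) : X → Fin m → ℝ :=
  projParam lam (bellman P γ (paramDist θ))

/-- The cube [0,1]^{X×[m]} of interpolation parameters. -/
def unitCube (X : Type*) (m : ℕ) : Set (X → Fin m → ℝ) :=
  {lam | ∀ x i, lam x i ∈ Set.Icc (0:ℝ) 1}

/-- Wasserstein-∞ distance (valued in [0,∞]). -/
noncomputable def winf (ν ν' : Measure ℝ) : ℝ≥0∞ :=
  ⨆ t : Set.Ioo (0:ℝ) 1, ENNReal.ofReal |invCDF ν t - invCDF ν' t|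

/-- Extension of w∞ to return-distribution functions: max over states. -/
noncomputable def wbar {X : Type*} (η η' : X → Measure ℝ) : ℝ≥0∞ :=
  ⨆ x : X, winf (η x) (η' x)

/-- Wasserstein-1 distance between probability distributions on ℝ. -/
noncomputable def w1 (ν ν' : Measure ℝ) : ℝ :=
  ∫ t in Set.Ioo (0:ℝ) 1, |invCDF ν t - invCDF ν' t|

/-- Uniform m-atom distributions. -/
noncomputable def FQ (m : ℕ) : Set (Measure ℝ) :=
  {ν | ∃ z : Fin m → ℝ, ν = paramDistOne z}

/-!
The layer-cake identity bounds `w₁` by the `L¹` distance between CDFs. The latter is convex under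
mixtures and homogeneous under affine maps, so the Bellman operator `T` is a `γ`-contraction for
its supremum over states. Placing an atom of mass `1/m` between the lower and the upper
`τ_i`-quantile for each `i` moves the CDF by at most `1/(2m)`, so for laws on `[V_min, V_max]` the
projection `Π` costs at most `ε = (V_max - V_min)/(2m)`. Comparing `η̂ = Π T η̂` with `η = T η`
through `T η̂` gives `W ≤ ε + γ W` for the supremum distance `W`. This yields `W ≤ ε/(1 - γ)` since
`W` is finite: mass of `η` outside `[V_min - c, V_max + c]` does not increase when `c` is replaced
by `γ c`, so tightness of `η` confines it to `[V_min, V_max]`, and the same holds for `η̂`.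
-/

section CDF

variable {ν : Measure ℝ} {a b t y : ℝ}

theorem cdf_eq_zero_of_ae_lt [IsProbabilityMeasure ν] (h : ∀ᵐ z ∂ν, y < z) : cdf ν y = 0 := by
  have h0 : ν (Iic y) = 0 := measure_eq_zero_iff_ae_notMem.2 (h.mono fun _ hz => not_le.2 hz)
  rw [cdf_eq_real, measureReal_def, h0, ENNReal.toReal_zero]

theorem cdf_eq_one_of_ae_le [IsProbabilityMeasure ν] (h : ∀ᵐ z ∂ν, z ≤ y) : cdf ν y = 1 := by
  rw [cdf_eq_real, measureReal_def, prob_compl_eq_zero_iff measurableSet_Iic |>.1 h,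
    ENNReal.toReal_one]

theorem bddBelow_setOf_le_cdf (ht : 0 < t) : BddBelow {y | t ≤ cdf ν y} := by
  obtain ⟨b, hb⟩ := ((tendsto_cdf_atBot ν).eventually_lt_const ht).exists
  exact ⟨b, fun y hy => ((monotone_cdf ν).reflect_lt (hb.trans_le hy)).le⟩

theorem setOf_lt_cdf_subset : {y | t < cdf ν y} ⊆ {y | t ≤ cdf ν y} :=
  fun _ h => le_of_lt (mem_ofPred.1 h)

theorem setOf_lt_cdf_nonempty (ht : t < 1) : {y | t < cdf ν y}.Nonempty :=
  ((tendsto_cdf_atTop ν).eventually_const_lt ht).exists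

theorem invCDF_le_iff (ht0 : 0 < t) (ht1 : t < 1) : invCDF ν t ≤ y ↔ t ≤ cdf ν y := by
  refine ⟨fun h => ?_, fun h => csInf_le (bddBelow_setOf_le_cdf ht0) h⟩
  have hright : Filter.Tendsto (cdf ν) (nhdsWithin y (Ioi y)) (nhds (cdf ν y)) :=
    ((cdf ν).right_continuous y).mono_left (nhdsWithin_mono _ Ioi_subset_Ici_self)
  refine ge_of_tendsto hright ?_
  filter_upwards [self_mem_nhdsWithin] with z hz
  obtain ⟨w, hw, hwz⟩ := exists_lt_of_csInf_lt
    ((setOf_lt_cdf_nonempty ht1).mono setOf_lt_cdf_subset) (h.trans_lt hz)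
  exact le_trans hw (monotone_cdf ν hwz.le)

theorem cdf_le_of_lt_upInvCDF (ht : 0 < t) (h : y < upInvCDF ν t) : cdf ν y ≤ t := by
  by_contra! hlt
  exact h.not_ge (csInf_le ((bddBelow_setOf_le_cdf ht).mono setOf_lt_cdf_subset) hlt)

theorem invCDF_le_upInvCDF (ht0 : 0 < t) (ht1 : t < 1) : invCDF ν t ≤ upInvCDF ν t :=
  csInf_le_csInf (bddBelow_setOf_le_cdf ht0) (setOf_lt_cdf_nonempty ht1) setOf_lt_cdf_subset

theorem le_invCDF_of_ae_le [IsProbabilityMeasure ν] (h : ∀ᵐ z ∂ν, a ≤ z) (ht0 : 0 < t)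
    (ht1 : t < 1) : a ≤ invCDF ν t := by
  by_contra! hlt
  have hcdf : cdf ν (invCDF ν t) = 0 :=
    cdf_eq_zero_of_ae_lt (h.mono fun _ hz => hlt.trans_le hz)
  exact (hcdf ▸ (invCDF_le_iff ht0 ht1).1 le_rfl).not_gt ht0

theorem upInvCDF_le_of_ae_le [IsProbabilityMeasure ν] (h : ∀ᵐ z ∂ν, z ≤ b) (ht0 : 0 < t)
    (ht1 : t < 1) : upInvCDF ν t ≤ b := by
  by_contra! hlt
  exact (cdf_eq_one_of_ae_le h ▸ cdf_le_of_lt_upInvCDF ht0 hlt).not_gt ht1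

end CDF

section CDFDist

/-- The `L¹` distance between cumulative distribution functions, a form of the Wasserstein-1
distance which is convex under mixtures. It takes values in `[0, ∞]` because a probability measure
need not have a first moment. -/
noncomputable def cdfDist (ν ν' : Measure ℝ) : ℝ≥0∞ := ∫⁻ y, ‖cdf ν y - cdf ν' y‖ₑ

theorem measurable_enorm_cdf_sub (ν ν' : Measure ℝ) :
    Measurable fun y => ‖cdf ν y - cdf ν' y‖ₑ :=
  ((monotone_cdf ν).measurable.sub (monotone_cdf ν').measurable).enorm

theorem cdfDist_self (ν : Measure ℝ) : cdfDist ν ν = 0 := by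
  simp [cdfDist]

theorem cdfDist_triangle (ν₁ ν₂ ν₃ : Measure ℝ) :
    cdfDist ν₁ ν₃ ≤ cdfDist ν₁ ν₂ + cdfDist ν₂ ν₃ := by
  unfold cdfDist
  rw [← lintegral_add_left (measurable_enorm_cdf_sub ν₁ ν₂)]
  refine lintegral_mono fun y => ?_
  rw [← sub_add_sub_cancel (cdf ν₁ y) (cdf ν₂ y) (cdf ν₃ y)]
  exact enorm_add_le _ _

theorem cdfDist_le_of_ae_mem_Icc {ν ν' : Measure ℝ} [IsProbabilityMeasure ν]
    [IsProbabilityMeasure ν'] {a b c : ℝ} (hc : 0 ≤ c) (hν : ∀ᵐ z ∂ν, z ∈ Icc a b)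
    (hν' : ∀ᵐ z ∂ν', z ∈ Icc a b) (h : ∀ y, |cdf ν y - cdf ν' y| ≤ c) :
    cdfDist ν ν' ≤ ENNReal.ofReal (c * (b - a)) := by
  have hle : ∀ y, ‖cdf ν y - cdf ν' y‖ₑ ≤ (Ico a b).indicator (fun _ => ENNReal.ofReal c) y := by
    intro y
    by_cases hy : y ∈ Ico a b
    · rw [indicator_of_mem hy, Real.enorm_eq_ofReal_abs]
      exact ENNReal.ofReal_le_ofReal (h y)
    · have heq : cdf ν y = cdf ν' y := by
        rcases lt_or_ge y a with hya | hay
        · rw [cdf_eq_zero_of_ae_lt (hν.mono fun _ hz => hya.trans_le hz.1),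
            cdf_eq_zero_of_ae_lt (hν'.mono fun _ hz => hya.trans_le hz.1)]
        · have hby : b ≤ y := not_lt.1 fun hyb => hy ⟨hay, hyb⟩
          rw [cdf_eq_one_of_ae_le (hν.mono fun _ hz => hz.2.trans hby),
            cdf_eq_one_of_ae_le (hν'.mono fun _ hz => hz.2.trans hby)]
      rw [heq, sub_self, enorm_zero]
      exact zero_le
  calc cdfDist ν ν' ≤ ∫⁻ y, (Ico a b).indicator (fun _ => ENNReal.ofReal c) y := lintegral_mono hle
    _ = ENNReal.ofReal (c * (b - a)) := by
      rw [lintegral_indicator_const measurableSet_Ico, Real.volume_Ico, ENNReal.ofReal_mul hc]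

theorem measurableSet_setOf_mem_uIoc_cdf (ν ν' : Measure ℝ) :
    MeasurableSet {p : ℝ × ℝ | p.1 ∈ uIoc (cdf ν p.2) (cdf ν' p.2)} := by
  have h : Measurable fun p : ℝ × ℝ => cdf ν p.2 :=
    (monotone_cdf ν).measurable.comp measurable_snd
  have h' : Measurable fun p : ℝ × ℝ => cdf ν' p.2 :=
    (monotone_cdf ν').measurable.comp measurable_snd
  exact (measurableSet_lt (h.min h') measurable_fst).inter
    (measurableSet_le measurable_fst (h.max h'))

theorem setOf_mem_uIoc_cdf (ν ν' : Measure ℝ) {t : ℝ} (ht : t ∈ Ioo (0 : ℝ) 1) :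
    {y | t ∈ uIoc (cdf ν y) (cdf ν' y)} =
      Ico (min (invCDF ν t) (invCDF ν' t)) (max (invCDF ν t) (invCDF ν' t)) := by
  ext y
  simp only [mem_ofPred_eq, mem_uIoc, mem_Ico, min_le_iff, max_le_iff, invCDF_le_iff ht.1 ht.2,
    ← not_le]
  tauto

/-- Both integrals measure the region between the graphs of the two CDFs. -/
theorem lintegral_enorm_invCDF_sub_le (ν ν' : Measure ℝ) :
    ∫⁻ t in Ioo (0 : ℝ) 1, ‖invCDF ν t - invCDF ν' t‖ₑ ≤ cdfDist ν ν' := by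
  calc ∫⁻ t in Ioo (0 : ℝ) 1, ‖invCDF ν t - invCDF ν' t‖ₑ
      = ∫⁻ t in Ioo (0 : ℝ) 1, volume {y | t ∈ uIoc (cdf ν y) (cdf ν' y)} := by
        refine setLIntegral_congr_fun measurableSet_Ioo fun t ht => ?_
        rw [setOf_mem_uIoc_cdf ν ν' ht, Real.volume_Ico, max_sub_min_eq_abs, abs_sub_comm,
          Real.enorm_eq_ofReal_abs]
    _ ≤ ∫⁻ t, volume {y | t ∈ uIoc (cdf ν y) (cdf ν' y)} := setLIntegral_le_lintegral _ _
    _ = (volume.prod volume) {p : ℝ × ℝ | p.1 ∈ uIoc (cdf ν p.2) (cdf ν' p.2)} :=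
        (Measure.prod_apply (measurableSet_setOf_mem_uIoc_cdf ν ν')).symm
    _ = ∫⁻ y, volume (uIoc (cdf ν y) (cdf ν' y)) :=
        Measure.prod_apply_symm (measurableSet_setOf_mem_uIoc_cdf ν ν')
    _ = cdfDist ν ν' := by
        simp only [cdfDist, Real.volume_uIoc, abs_sub_comm, Real.enorm_eq_ofReal_abs]

theorem w1_le_of_cdfDist_le {ν ν' : Measure ℝ} {c : ℝ} (hc : 0 ≤ c)
    (h : cdfDist ν ν' ≤ ENNReal.ofReal c) : w1 ν ν' ≤ c := by
  calc w1 ν ν' ≤ ‖w1 ν ν'‖ := Real.le_norm_self _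
    _ ≤ (∫⁻ t in Ioo (0 : ℝ) 1, ‖invCDF ν t - invCDF ν' t‖ₑ).toReal := by
      simpa only [w1, ofReal_norm, Real.enorm_abs] using norm_integral_le_lintegral_norm
        (μ := volume.restrict (Ioo (0 : ℝ) 1)) fun t => |invCDF ν t - invCDF ν' t|
    _ ≤ c := ENNReal.toReal_le_of_le_ofReal hc ((lintegral_enorm_invCDF_sub_le ν ν').trans h)

theorem cdf_map_add_mul (ν : Measure ℝ) [IsProbabilityMeasure ν] (r : ℝ) {γ : ℝ} (hγ : 0 < γ)
    (y : ℝ) : cdf (ν.map fun z => r + γ * z) y = cdf ν ((y - r) / γ) := by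
  have hmeas : Measurable fun z => r + γ * z := by fun_prop
  have := Measure.isProbabilityMeasure_map (μ := ν) hmeas.aemeasurable
  have hpre : (fun z => r + γ * z) ⁻¹' Iic y = Iic ((y - r) / γ) := by
    ext z
    rw [mem_preimage, mem_Iic, mem_Iic, le_div_iff₀ hγ, mul_comm z, le_sub_iff_add_le']
  rw [cdf_eq_real, cdf_eq_real, map_measureReal_apply hmeas measurableSet_Iic, hpre]

theorem lintegral_comp_sub_div {f : ℝ → ℝ≥0∞} (hf : Measurable f) {γ : ℝ} (hγ : 0 < γ) (r : ℝ) :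
    ∫⁻ y, f ((y - r) / γ) = ENNReal.ofReal γ * ∫⁻ z, f z := by
  rw [lintegral_sub_right_eq_self (fun y => f (y / γ)) r]
  conv_lhs => rw [← Real.smul_map_volume_mul_left hγ.ne']
  rw [lintegral_smul_measure, lintegral_map (by fun_prop) (by fun_prop), abs_of_pos hγ, smul_eq_mul]
  simp only [mul_div_cancel_left₀ _ hγ.ne']

theorem cdfDist_map_add_mul (ν ν' : Measure ℝ) [IsProbabilityMeasure ν] [IsProbabilityMeasure ν']
    (r : ℝ) {γ : ℝ} (hγ : 0 ≤ γ) :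
    cdfDist (ν.map fun z => r + γ * z) (ν'.map fun z => r + γ * z) =
      ENNReal.ofReal γ * cdfDist ν ν' := by
  rcases hγ.eq_or_lt with rfl | hγ
  · simp only [zero_mul, add_zero, Measure.map_const, measure_univ, one_smul, cdfDist_self,
      ENNReal.ofReal_zero]
  · simp only [cdfDist, cdf_map_add_mul _ r hγ]
    exact lintegral_comp_sub_div (measurable_enorm_cdf_sub ν ν') hγ r

variable {α : Type*} [MeasurableSpace α]

theorem measurable_uncurry_cdf (κ : Kernel α ℝ) [IsMarkovKernel κ] :
    Measurable fun p : α × ℝ => cdf (κ p.1) p.2 := by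
  have hset : MeasurableSet {q : (α × ℝ) × ℝ | q.2 ≤ q.1.2} :=
    measurableSet_le measurable_snd (by fun_prop)
  simp only [cdf_eq_real]
  exact (Kernel.measurable_kernel_prodMk_left (κ := κ.comap Prod.fst measurable_fst)
    hset).ennreal_toReal

theorem cdf_comp (μ : Measure α) [IsProbabilityMeasure μ] (κ : Kernel α ℝ) [IsMarkovKernel κ]
    (y : ℝ) : cdf (κ ∘ₘ μ) y = ∫ a, cdf (κ a) y ∂μ := by
  simp only [cdf_eq_real, measureReal_def]
  rw [Measure.bind_apply measurableSet_Iic κ.aemeasurable, integral_toReal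
    (κ.measurable_coe measurableSet_Iic).aemeasurable (.of_forall fun _ => measure_lt_top _ _)]

theorem integrable_cdf (μ : Measure α) [IsFiniteMeasure μ] (κ : Kernel α ℝ) [IsMarkovKernel κ]
    (y : ℝ) : Integrable (fun a => cdf (κ a) y) μ :=
  .of_bound ((measurable_uncurry_cdf κ).comp measurable_prodMk_right).aestronglyMeasurable 1
    (.of_forall fun a => by
      rw [Real.norm_of_nonneg (cdf_nonneg _ _)]
      exact cdf_le_one _ _)

theorem cdfDist_comp_le (μ : Measure α) [IsProbabilityMeasure μ] (κ κ' : Kernel α ℝ)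
    [IsMarkovKernel κ] [IsMarkovKernel κ'] :
    cdfDist (κ ∘ₘ μ) (κ' ∘ₘ μ) ≤ ∫⁻ a, cdfDist (κ a) (κ' a) ∂μ := by
  have hmeas : Measurable fun p : ℝ × α => ‖cdf (κ p.2) p.1 - cdf (κ' p.2) p.1‖ₑ :=
    (((measurable_uncurry_cdf κ).sub (measurable_uncurry_cdf κ')).comp measurable_swap).enorm
  calc cdfDist (κ ∘ₘ μ) (κ' ∘ₘ μ)
      = ∫⁻ y, ‖∫ a, (cdf (κ a) y - cdf (κ' a) y) ∂μ‖ₑ := by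
        simp only [cdfDist, cdf_comp, integral_sub (integrable_cdf μ κ _) (integrable_cdf μ κ' _)]
    _ ≤ ∫⁻ y, ∫⁻ a, ‖cdf (κ a) y - cdf (κ' a) y‖ₑ ∂μ :=
        lintegral_mono fun y => enorm_integral_le_lintegral_enorm _
    _ = ∫⁻ a, cdfDist (κ a) (κ' a) ∂μ := lintegral_lintegral_swap hmeas.aemeasurable

end CDFDist

section Projection

variable {m : ℕ}

theorem qlevel_mul (i : Fin m) : qlevel m i * m = i + 1 / 2 := by
  have hm : (m : ℝ) ≠ 0 := by exact_mod_cast i.pos.ne'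
  unfold qlevel
  field_simp

theorem qlevel_mem_Ioo (i : Fin m) : qlevel m i ∈ Ioo (0 : ℝ) 1 := by
  have hm : (0 : ℝ) < m := by exact_mod_cast i.pos
  have hi : (i : ℝ) + 1 ≤ m := by exact_mod_cast i.isLt
  refine ⟨by unfold qlevel; positivity, ?_⟩
  rw [qlevel, div_lt_one (by positivity)]
  linarith

theorem isProbabilityMeasure_paramDistOne (hm : 0 < m) (θ : Fin m → ℝ) :
    IsProbabilityMeasure (paramDistOne θ) := by
  constructor
  simp only [paramDistOne, Measure.smul_apply, Measure.finsetSum_apply, measure_univ,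
    Finset.sum_const, Finset.card_univ, Fintype.card_fin, smul_eq_mul, nsmul_eq_mul, mul_one]
  exact ENNReal.inv_mul_cancel (by exact_mod_cast hm.ne') (by simp)

theorem ae_paramDistOne_iff {θ : Fin m → ℝ} {p : ℝ → Prop} :
    (∀ᵐ z ∂paramDistOne θ, p z) ↔ ∀ i, p (θ i) := by
  have hm : (m : ℝ≥0∞)⁻¹ ≠ 0 := ENNReal.inv_ne_zero.2 (ENNReal.natCast_ne_top m)
  simp only [paramDistOne, Measure.ae_ennreal_smul_measure_iff hm, ae_finsetSum_measure_iff,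
    Finset.mem_univ, true_imp_iff, ae_dirac_eq, Filter.eventually_pure]

theorem inv_le_paramDistOne {θ : Fin m → ℝ} {s : Set ℝ} {i : Fin m} (hi : θ i ∈ s) :
    (m : ℝ≥0∞)⁻¹ ≤ paramDistOne θ s := by
  have hsum : 1 ≤ ∑ j, Measure.dirac (θ j) s :=
    (Measure.dirac_apply_of_mem hi).symm.le.trans
      (Finset.single_le_sum (f := fun j => Measure.dirac (θ j) s) (fun _ _ => zero_le)
        (Finset.mem_univ i))
  simpa [paramDistOne] using mul_le_mul_right hsum (m : ℝ≥0∞)⁻¹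

theorem exists_isCompact_ae_mem_of_isTightMeasureSet {S : Set (Measure ℝ)} (hS : S ⊆ FQ m)
    (htight : IsTightMeasureSet S) : ∃ K : Set ℝ, IsCompact K ∧ ∀ ν ∈ S, ∀ᵐ z ∂ν, z ∈ K := by
  obtain ⟨K, hK, hmass⟩ := isTightMeasureSet_iff_exists_isCompact_measure_compl_le.1 htight
    ((m + 1 : ℕ) : ℝ≥0∞)⁻¹ (ENNReal.inv_pos.2 (ENNReal.natCast_ne_top _))
  have hlt : ((m + 1 : ℕ) : ℝ≥0∞)⁻¹ < (m : ℝ≥0∞)⁻¹ :=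
    ENNReal.inv_lt_inv.2 (by exact_mod_cast m.lt_succ_self)
  refine ⟨K, hK, fun ν hν => ?_⟩
  obtain ⟨θ, rfl⟩ := hS hν
  refine ae_paramDistOne_iff.2 fun i => ?_
  by_contra hi
  exact ((inv_le_paramDistOne hi).trans (hmass _ hν)).not_gt hlt

theorem cdf_paramDistOne_mul (hm : 0 < m) (θ : Fin m → ℝ) (y : ℝ) :
    cdf (paramDistOne θ) y * m = (Finset.univ.filter fun i => θ i ≤ y).card := by
  have := isProbabilityMeasure_paramDistOne hm θ
  have hm' : (m : ℝ) ≠ 0 := by exact_mod_cast hm.ne'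
  rw [cdf_eq_real, measureReal_def]
  simp only [paramDistOne, Measure.smul_apply, Measure.finsetSum_apply,
    Measure.dirac_apply' _ measurableSet_Iic, smul_eq_mul, indicator, mem_Iic, Pi.one_apply,
    Finset.sum_boole, ENNReal.toReal_mul, ENNReal.toReal_inv, ENNReal.toReal_natCast]
  field_simp

theorem exists_mem_card_le_succ {s : Finset (Fin m)} (hs : s.Nonempty) :
    ∃ i ∈ s, s.card ≤ (i : ℕ) + 1 := by
  refine ⟨s.max' hs, s.max'_mem hs, ?_⟩
  rw [← Fin.card_Iic]
  exact Finset.card_le_card fun j hj => Finset.mem_Iic.2 (s.le_max' j hj)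

theorem exists_notMem_le_card {s : Finset (Fin m)} (hs : sᶜ.Nonempty) :
    ∃ i ∉ s, (i : ℕ) ≤ s.card := by
  refine ⟨sᶜ.min' hs, Finset.mem_compl.1 (sᶜ.min'_mem hs), ?_⟩
  rw [← Fin.card_Iio]
  refine Finset.card_le_card fun j hj => ?_
  by_contra hjs
  exact (Finset.mem_Iio.1 hj).not_ge (sᶜ.min'_le j (Finset.mem_compl.2 hjs))

theorem cdf_paramDistOne_mul_le (hm : 0 < m) {ν : Measure ℝ} {θ : Fin m → ℝ}
    (hθ : ∀ i, invCDF ν (qlevel m i) ≤ θ i) (y : ℝ) :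
    cdf (paramDistOne θ) y * m ≤ cdf ν y * m + 1 / 2 := by
  rw [cdf_paramDistOne_mul hm]
  set s := Finset.univ.filter fun i => θ i ≤ y
  rcases s.eq_empty_or_nonempty with hs | hs
  · have hnonneg := mul_nonneg (cdf_nonneg ν y) m.cast_nonneg
    rw [hs, Finset.card_empty, Nat.cast_zero]
    linarith
  · obtain ⟨i, his, hcard⟩ := exists_mem_card_le_succ hs
    have hq : qlevel m i ≤ cdf ν y := (invCDF_le_iff (qlevel_mem_Ioo i).1 (qlevel_mem_Ioo i).2).1
      ((hθ i).trans (Finset.mem_filter.1 his).2)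
    have hcard' : (s.card : ℝ) ≤ i + 1 := by exact_mod_cast hcard
    linarith [qlevel_mul i, mul_le_mul_of_nonneg_right hq (m.cast_nonneg : (0 : ℝ) ≤ m)]

theorem cdf_mul_le_cdf_paramDistOne_mul (hm : 0 < m) {ν : Measure ℝ} {θ : Fin m → ℝ}
    (hθ : ∀ i, θ i ≤ upInvCDF ν (qlevel m i)) (y : ℝ) :
    cdf ν y * m ≤ cdf (paramDistOne θ) y * m + 1 / 2 := by
  rw [cdf_paramDistOne_mul hm]
  set s := Finset.univ.filter fun i => θ i ≤ y
  rcases sᶜ.eq_empty_or_nonempty with hs | hs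
  · have hle := mul_le_mul_of_nonneg_right (cdf_le_one ν y) (m.cast_nonneg : (0 : ℝ) ≤ m)
    rw [(Finset.compl_eq_empty_iff s).1 hs, Finset.card_univ, Fintype.card_fin]
    linarith
  · obtain ⟨i, his, hcard⟩ := exists_notMem_le_card hs
    have hy : y < θ i := not_le.1 fun h => his (Finset.mem_filter.2 ⟨Finset.mem_univ i, h⟩)
    have hq := cdf_le_of_lt_upInvCDF (qlevel_mem_Ioo i).1 (hy.trans_le (hθ i))
    have hcard' : (i : ℝ) ≤ s.card := by exact_mod_cast hcard
    linarith [qlevel_mul i, mul_le_mul_of_nonneg_right hq (m.cast_nonneg : (0 : ℝ) ≤ m)]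

theorem abs_cdf_paramDistOne_sub_le (hm : 0 < m) {ν : Measure ℝ} {θ : Fin m → ℝ}
    (hθ : ∀ i, θ i ∈ Icc (invCDF ν (qlevel m i)) (upInvCDF ν (qlevel m i))) (y : ℝ) :
    |cdf (paramDistOne θ) y - cdf ν y| ≤ 1 / (2 * m) := by
  have hm' : (0 : ℝ) < m := by exact_mod_cast hm
  have hhalf : (1 / (2 * m) : ℝ) * m = 1 / 2 := by field_simp
  refine le_of_mul_le_mul_right ?_ hm'
  have habs : |cdf (paramDistOne θ) y - cdf ν y| * m =
      |cdf (paramDistOne θ) y * m - cdf ν y * m| := by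
    rw [← sub_mul, abs_mul, abs_of_pos hm']
  rw [hhalf, habs, abs_sub_le_iff]
  constructor
  · linarith [cdf_paramDistOne_mul_le hm (fun i => (hθ i).1) y]
  · linarith [cdf_mul_le_cdf_paramDistOne_mul hm (fun i => (hθ i).2) y]

variable {X : Type*} {lam : X → Fin m → ℝ} {η : X → Measure ℝ} {x : X} {a b : ℝ}

theorem projParam_mem_Icc_quantile (hlam : lam ∈ unitCube X m) (η : X → Measure ℝ) (x : X)
    (i : Fin m) :
    projParam lam η x i ∈ Icc (invCDF (η x) (qlevel m i)) (upInvCDF (η x) (qlevel m i)) :=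
  convex_Icc _ _
    (left_mem_Icc.2 (invCDF_le_upInvCDF (qlevel_mem_Ioo i).1 (qlevel_mem_Ioo i).2))
    (right_mem_Icc.2 (invCDF_le_upInvCDF (qlevel_mem_Ioo i).1 (qlevel_mem_Ioo i).2))
    (sub_nonneg.2 (hlam x i).2) (hlam x i).1 (sub_add_cancel _ _)

theorem ae_mem_Icc_proj (hlam : lam ∈ unitCube X m) [IsProbabilityMeasure (η x)]
    (h : ∀ᵐ z ∂η x, z ∈ Icc a b) : ∀ᵐ z ∂proj lam η x, z ∈ Icc a b := by
  refine ae_paramDistOne_iff.2 fun i => ?_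
  obtain ⟨hlow, hup⟩ := projParam_mem_Icc_quantile hlam η x i
  obtain ⟨hq0, hq1⟩ := qlevel_mem_Ioo i
  exact ⟨(le_invCDF_of_ae_le (h.mono fun _ hz => hz.1) hq0 hq1).trans hlow,
    hup.trans (upInvCDF_le_of_ae_le (h.mono fun _ hz => hz.2) hq0 hq1)⟩

theorem cdfDist_proj_le (hm : 0 < m) (hlam : lam ∈ unitCube X m) [IsProbabilityMeasure (η x)]
    (h : ∀ᵐ z ∂η x, z ∈ Icc a b) :
    cdfDist (proj lam η x) (η x) ≤ ENNReal.ofReal ((b - a) / (2 * m)) := by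
  have : IsProbabilityMeasure (proj lam η x) := isProbabilityMeasure_paramDistOne hm _
  rw [← one_div_mul_eq_div]
  exact cdfDist_le_of_ae_mem_Icc (by positivity) (ae_mem_Icc_proj hlam h) h
    (abs_cdf_paramDistOne_sub_le hm (projParam_mem_Icc_quantile hlam η x))

end Projection

section Bellman

variable {X : Type*} [MeasurableSpace X] {P : X → Measure (ℝ × X)} {γ Rmin Rmax : ℝ}

/-- The law of `r + γ G` with `G ∼ η x'`, as a kernel in the reward–next-state pair `(r, x')`; the
Bellman operator is its mixture under `P`. Return-distribution functions are kernels so that this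
mixture makes sense over an arbitrary measurable state space. -/
noncomputable def bellmanKernel (γ : ℝ) (η : Kernel X ℝ) : Kernel (ℝ × X) ℝ :=
  (Kernel.id ×ₖ η.comap Prod.snd measurable_snd).map fun q => q.1.1 + γ * q.2

instance (η : Kernel X ℝ) [IsMarkovKernel η] : IsMarkovKernel (bellmanKernel γ η) :=
  Kernel.IsMarkovKernel.map _ (by fun_prop)

theorem bellmanKernel_apply (γ : ℝ) (η : Kernel X ℝ) [IsSFiniteKernel η] (p : ℝ × X) :
    bellmanKernel γ η p = (η p.2).map fun z => p.1 + γ * z := by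
  rw [bellmanKernel, Kernel.map_apply _ (by fun_prop), Kernel.prod_apply, Kernel.id_apply,
    Kernel.comap_apply, Measure.dirac_prod, Measure.map_map (by fun_prop) (by fun_prop)]
  rfl

theorem bellman_eq_comp (P : X → Measure (ℝ × X)) (γ : ℝ) (η : Kernel X ℝ) [IsSFiniteKernel η]
    (x : X) : bellman P γ η x = bellmanKernel γ η ∘ₘ P x := by
  simp only [bellman, ← bellmanKernel_apply]

theorem isProbabilityMeasure_bellman (P : X → Measure (ℝ × X)) (γ : ℝ) (η : Kernel X ℝ)
    [IsMarkovKernel η] (x : X) [IsProbabilityMeasure (P x)] :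
    IsProbabilityMeasure (bellman P γ η x) := by
  rw [bellman_eq_comp]
  infer_instance

theorem cdfDist_bellman_le (hγ : 0 ≤ γ) (η η' : Kernel X ℝ) [IsMarkovKernel η]
    [IsMarkovKernel η'] (x : X) [IsProbabilityMeasure (P x)] :
    cdfDist (bellman P γ η x) (bellman P γ η' x) ≤
      ENNReal.ofReal γ * ⨆ x', cdfDist (η x') (η' x') := by
  rw [bellman_eq_comp, bellman_eq_comp]
  refine (cdfDist_comp_le _ _ _).trans ?_
  calc ∫⁻ p, cdfDist (bellmanKernel γ η p) (bellmanKernel γ η' p) ∂P x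
      = ∫⁻ p, ENNReal.ofReal γ * cdfDist (η p.2) (η' p.2) ∂P x := by
        simp only [bellmanKernel_apply, cdfDist_map_add_mul _ _ _ hγ]
    _ ≤ ∫⁻ _, ENNReal.ofReal γ * ⨆ x', cdfDist (η x') (η' x') ∂P x :=
        lintegral_mono fun p => by gcongr; exact le_iSup (fun x' => cdfDist (η x') (η' x')) p.2
    _ = ENNReal.ofReal γ * ⨆ x', cdfDist (η x') (η' x') := by
        rw [lintegral_const, measure_univ, mul_one]

theorem cdfDist_le_of_bellman_eq [∀ x, IsProbabilityMeasure (P x)] (hγ0 : 0 ≤ γ) (hγ1 : γ < 1)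
    {η ηπ : Kernel X ℝ} [IsMarkovKernel η] [IsMarkovKernel ηπ] (hfix : bellman P γ ηπ = ηπ)
    (hfin : ⨆ x, cdfDist (η x) (ηπ x) ≠ ∞) {ε : ℝ}
    (hε : ∀ x, cdfDist (η x) (bellman P γ η x) ≤ ENNReal.ofReal ε) (x : X) :
    cdfDist (η x) (ηπ x) ≤ ENNReal.ofReal (ε / (1 - γ)) := by
  set W := ⨆ x, cdfDist (η x) (ηπ x)
  have hstep : W ≤ ENNReal.ofReal ε + ENNReal.ofReal γ * W := iSup_le fun x =>
    calc cdfDist (η x) (ηπ x)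
        ≤ cdfDist (η x) (bellman P γ η x) + cdfDist (bellman P γ η x) (ηπ x) :=
          cdfDist_triangle _ _ _
      _ ≤ ENNReal.ofReal ε + ENNReal.ofReal γ * W := by
          conv_lhs => rw [← hfix]
          exact add_le_add (hε x) (cdfDist_bellman_le hγ0 η ηπ x)
  have hsplit : W = W * ENNReal.ofReal (1 - γ) + ENNReal.ofReal γ * W := by
    rw [mul_comm _ W, ← mul_add, ← ENNReal.ofReal_add (sub_nonneg.2 hγ1.le) hγ0, sub_add_cancel,
      ENNReal.ofReal_one, mul_one]
  have hcontr : W * ENNReal.ofReal (1 - γ) ≤ ENNReal.ofReal ε := by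
    conv_lhs at hstep => rw [hsplit]
    exact ENNReal.le_of_add_le_add_right (ENNReal.mul_ne_top ENNReal.ofReal_ne_top hfin) hstep
  have hpos : 0 < 1 - γ := sub_pos.2 hγ1
  rw [ENNReal.ofReal_div_of_pos hpos]
  exact (le_iSup (fun x => cdfDist (η x) (ηπ x)) x).trans
    ((ENNReal.le_div_iff_mul_le (.inl (ENNReal.ofReal_pos.2 hpos).ne')
      (.inl ENNReal.ofReal_ne_top)).2 hcontr)

/-- The interval `[V_min - c, V_max + c]` around the possible discounted returns, where
`V_min = R_min / (1 - γ)` and `V_max = R_max / (1 - γ)`. -/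
def valueIcc (Rmin Rmax γ c : ℝ) : Set ℝ := Icc (Rmin / (1 - γ) - c) (Rmax / (1 - γ) + c)

theorem monotone_valueIcc : Monotone (valueIcc Rmin Rmax γ) := fun _ _ h =>
  Icc_subset_Icc (sub_le_sub_left h _) (add_le_add_right h _)

theorem exists_subset_valueIcc (Rmin Rmax γ : ℝ) {K : Set ℝ} (hK : Bornology.IsBounded K) :
    ∃ c, K ⊆ valueIcc Rmin Rmax γ c := by
  obtain ⟨r, hr⟩ := hK.subset_closedBall 0
  rw [Real.closedBall_eq_Icc] at hr
  refine ⟨|Rmin / (1 - γ)| + |Rmax / (1 - γ)| + r, hr.trans (Icc_subset_Icc ?_ ?_)⟩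
  · linarith [le_abs_self (Rmin / (1 - γ)), abs_nonneg (Rmax / (1 - γ))]
  · linarith [neg_abs_le (Rmax / (1 - γ)), abs_nonneg (Rmin / (1 - γ))]

theorem ae_mem_Icc_of_forall_pos {ν : Measure ℝ}
    (h : ∀ ε, 0 < ε → ∀ᵐ z ∂ν, z ∈ valueIcc Rmin Rmax γ ε) :
    ∀ᵐ z ∂ν, z ∈ Icc (Rmin / (1 - γ)) (Rmax / (1 - γ)) := by
  have hall : ∀ᵐ z ∂ν, ∀ n : ℕ, z ∈ valueIcc Rmin Rmax γ (1 / (n + 1)) :=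
    ae_all_iff.2 fun n => h _ Nat.one_div_pos_of_nat
  have hlim := tendsto_one_div_add_atTop_nhds_zero_nat (𝕜 := ℝ)
  filter_upwards [hall] with z hz
  constructor
  · simpa only [sub_zero] using le_of_tendsto' (hlim.const_sub _) fun n => (hz n).1
  · simpa only [add_zero] using ge_of_tendsto' (hlim.const_add _) fun n => (hz n).2

theorem add_mul_mem_valueIcc (hγ0 : 0 ≤ γ) (hγ1 : γ < 1) {c r z : ℝ} (hr : r ∈ Icc Rmin Rmax)
    (hz : z ∈ valueIcc Rmin Rmax γ c) : r + γ * z ∈ valueIcc Rmin Rmax γ (γ * c) := by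
  have hgeom : ∀ R : ℝ, R + γ * (R / (1 - γ)) = R / (1 - γ) := fun R => by
    have := (sub_pos.2 hγ1).ne'
    field_simp
    ring
  constructor
  · linarith [hr.1, mul_le_mul_of_nonneg_left hz.1 hγ0, hgeom Rmin]
  · linarith [hr.2, mul_le_mul_of_nonneg_left hz.2 hγ0, hgeom Rmax]

theorem bellman_compl_valueIcc_le (hγ0 : 0 ≤ γ) (hγ1 : γ < 1) {x : X}
    [IsProbabilityMeasure (P x)] (hsupp : ∀ᵐ p ∂P x, p.1 ∈ Icc Rmin Rmax) {η : Kernel X ℝ}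
    [IsSFiniteKernel η] {c : ℝ} {δ : ℝ≥0∞} (hη : ∀ x, η x (valueIcc Rmin Rmax γ c)ᶜ ≤ δ) :
    bellman P γ η x (valueIcc Rmin Rmax γ (γ * c))ᶜ ≤ δ := by
  have hmeas : MeasurableSet (valueIcc Rmin Rmax γ (γ * c))ᶜ := measurableSet_Icc.compl
  rw [bellman_eq_comp, Measure.bind_apply hmeas (bellmanKernel γ η).aemeasurable]
  calc ∫⁻ p, bellmanKernel γ η p (valueIcc Rmin Rmax γ (γ * c))ᶜ ∂P x
      ≤ ∫⁻ _, δ ∂P x := by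
        refine lintegral_mono_ae (hsupp.mono fun p hp => ?_)
        rw [bellmanKernel_apply, Measure.map_apply (by fun_prop) hmeas]
        refine (measure_mono ?_).trans (hη p.2)
        exact compl_subset_compl.2 fun z hz => add_mul_mem_valueIcc hγ0 hγ1 hp hz
    _ = δ := by rw [lintegral_const, measure_univ, mul_one]

theorem ae_mem_bellman_valueIcc (hγ0 : 0 ≤ γ) (hγ1 : γ < 1) {x : X}
    [IsProbabilityMeasure (P x)] (hsupp : ∀ᵐ p ∂P x, p.1 ∈ Icc Rmin Rmax) {η : Kernel X ℝ}
    [IsSFiniteKernel η] {c : ℝ} (hη : ∀ x, ∀ᵐ z ∂η x, z ∈ valueIcc Rmin Rmax γ c) :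
    ∀ᵐ z ∂bellman P γ η x, z ∈ valueIcc Rmin Rmax γ (γ * c) :=
  nonpos_iff_eq_zero.1
    (bellman_compl_valueIcc_le hγ0 hγ1 hsupp fun x => (mem_ae_iff.1 (hη x)).le)

theorem mem_of_isUpperSet_of_mul_mem {s : Set ℝ} (hs : IsUpperSet s) (hγ0 : 0 ≤ γ) (hγ1 : γ < 1)
    (hmul : ∀ c ∈ s, γ * c ∈ s) {c ε : ℝ} (hc : c ∈ s) (hε : 0 < ε) : ε ∈ s := by
  have hpow : ∀ n : ℕ, γ ^ n * c ∈ s := by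
    intro n
    induction n with
    | zero => simpa only [pow_zero, one_mul] using hc
    | succ n ih => simpa only [pow_succ', mul_assoc] using hmul _ ih
  have hlim : Filter.Tendsto (fun n : ℕ => γ ^ n * c) Filter.atTop (nhds 0) := by
    simpa only [zero_mul] using (tendsto_pow_atTop_nhds_zero_of_lt_one hγ0 hγ1).mul_const c
  obtain ⟨n, hn⟩ := (hlim.eventually_lt_const hε).exists
  exact hs hn.le (hpow n)

theorem ae_mem_Icc_of_bellman_eq [∀ x, IsProbabilityMeasure (P x)] (hγ0 : 0 ≤ γ)
    (hγ1 : γ < 1) (hsupp : ∀ x, ∀ᵐ p ∂P x, p.1 ∈ Icc Rmin Rmax) {η : Kernel X ℝ} [IsSFiniteKernel η]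
    (hfix : bellman P γ η = η) (htight : IsTightMeasureSet (range η)) (x : X) :
    ∀ᵐ z ∂η x, z ∈ Icc (Rmin / (1 - γ)) (Rmax / (1 - γ)) := by
  refine ae_mem_Icc_of_forall_pos fun ε hε =>
    nonpos_iff_eq_zero.1 (le_of_forall_gt_imp_ge_of_dense fun δ hδ => ?_)
  obtain ⟨K, hK, hmass⟩ :=
    isTightMeasureSet_iff_exists_isCompact_measure_compl_le.1 htight δ hδ
  obtain ⟨c, hc⟩ := exists_subset_valueIcc Rmin Rmax γ hK.isBounded
  refine mem_of_isUpperSet_of_mul_mem (s := {c | ∀ x, η x (valueIcc Rmin Rmax γ c)ᶜ ≤ δ})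
    (c := c) ?_ hγ0 hγ1 ?_ ?_ hε x
  · exact fun a b hab ha x =>
      (measure_mono (compl_subset_compl.2 (monotone_valueIcc hab))).trans (ha x)
  · intro c hc x
    rw [← hfix]
    exact bellman_compl_valueIcc_le hγ0 hγ1 (hsupp x) hc
  · exact fun x => (measure_mono (compl_subset_compl.2 hc)).trans (hmass _ (mem_range_self x))

variable {m : ℕ} {lam : X → Fin m → ℝ}

theorem ae_mem_Icc_of_proj_bellman_eq [∀ x, IsProbabilityMeasure (P x)] (hγ0 : 0 ≤ γ)
    (hγ1 : γ < 1) (hsupp : ∀ x, ∀ᵐ p ∂P x, p.1 ∈ Icc Rmin Rmax) (hlam : lam ∈ unitCube X m)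
    {η : Kernel X ℝ} [IsMarkovKernel η] (hfix : proj lam (bellman P γ η) = η)
    (htight : IsTightMeasureSet (range η)) (x : X) :
    ∀ᵐ z ∂η x, z ∈ Icc (Rmin / (1 - γ)) (Rmax / (1 - γ)) := by
  have hFQ : range η ⊆ FQ m := by
    rintro _ ⟨x, rfl⟩
    exact ⟨projParam lam (bellman P γ η) x, (congrFun hfix x).symm⟩
  obtain ⟨K, hK, hmem⟩ := exists_isCompact_ae_mem_of_isTightMeasureSet hFQ htight
  obtain ⟨c, hc⟩ := exists_subset_valueIcc Rmin Rmax γ hK.isBounded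
  refine ae_mem_Icc_of_forall_pos fun ε hε => ?_
  refine mem_of_isUpperSet_of_mul_mem
    (s := {c | ∀ x, ∀ᵐ z ∂η x, z ∈ valueIcc Rmin Rmax γ c}) (c := c) ?_ hγ0 hγ1 ?_ ?_ hε x
  · exact fun a b hab ha x => (ha x).mono fun z hz => monotone_valueIcc hab hz
  · intro c hc x
    have := isProbabilityMeasure_bellman P γ η x
    rw [← congrFun hfix x]
    exact ae_mem_Icc_proj hlam (ae_mem_bellman_valueIcc hγ0 hγ1 (hsupp x) hc)
  · exact fun x => (hmem _ (mem_range_self x)).mono fun z hz => hc hz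

theorem cdfDist_bellman_le_of_proj_bellman_eq (hγ0 : 0 ≤ γ) (hγ1 : γ < 1) {x : X}
    [IsProbabilityMeasure (P x)] (hsupp : ∀ᵐ p ∂P x, p.1 ∈ Icc Rmin Rmax) (hm : 0 < m)
    (hlam : lam ∈ unitCube X m) {η : Kernel X ℝ} [IsMarkovKernel η]
    (hfix : proj lam (bellman P γ η) = η)
    (hη : ∀ x, ∀ᵐ z ∂η x, z ∈ Icc (Rmin / (1 - γ)) (Rmax / (1 - γ))) :
    cdfDist (η x) (bellman P γ η x) ≤
      ENNReal.ofReal ((Rmax / (1 - γ) - Rmin / (1 - γ)) / (2 * m)) := by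
  have := isProbabilityMeasure_bellman P γ η x
  have hbellman : ∀ᵐ z ∂bellman P γ η x, z ∈ Icc (Rmin / (1 - γ)) (Rmax / (1 - γ)) := by
    simpa only [valueIcc, mul_zero, sub_zero, add_zero] using
      ae_mem_bellman_valueIcc (c := 0) hγ0 hγ1 hsupp
        (by simpa only [valueIcc, sub_zero, add_zero] using hη)
  simpa only [hfix] using cdfDist_proj_le hm hlam hbellman

end Bellman

theorem isTightMeasureSet_range_of_finite {ι 𝓧 : Type*} [Finite ι] [TopologicalSpace 𝓧]
    [MeasurableSpace 𝓧] {μ : ι → Measure 𝓧} (h : ∀ i, IsTightMeasureSet {μ i}) :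
    IsTightMeasureSet (range μ) := by
  refine isTightMeasureSet_iff_exists_isCompact_measure_compl_le.2 fun ε hε => ?_
  choose K hK hmass using fun i =>
    isTightMeasureSet_iff_exists_isCompact_measure_compl_le.1 (h i) ε hε
  refine ⟨⋃ i, K i, isCompact_iUnion hK, forall_mem_range.2 fun i => ?_⟩
  exact (measure_mono (compl_subset_compl.2 (subset_iUnion K i))).trans (hmass i _ rfl)

theorem qdp_fixed_point_quality_general {X : Type*} [MeasurableSpace X]
    (P : X → Measure (ℝ × X)) (hP : ∀ x, IsProbabilityMeasure (P x))
    (γ : ℝ) (hγ0 : 0 ≤ γ) (hγ1 : γ < 1) (Rmin Rmax : ℝ)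
    (hsupp : ∀ x, ∀ᵐ p ∂P x, p.1 ∈ Icc Rmin Rmax)
    (ηπ : Kernel X ℝ) [IsMarkovKernel ηπ] (hfix : bellman P γ ηπ = ηπ)
    (htight : IsTightMeasureSet (range ηπ))
    {m : ℕ} (hm : 0 < m) (lam : X → Fin m → ℝ) (hlam : lam ∈ unitCube X m)
    (ηhat : Kernel X ℝ) (hhatfix : proj lam (bellman P γ ηhat) = ηhat)
    (hhattight : IsTightMeasureSet (range ηhat)) (x : X) :
    w1 (ηhat x) (ηπ x) ≤ (Rmax / (1 - γ) - Rmin / (1 - γ)) / (2 * m * (1 - γ)) := by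
  have : IsMarkovKernel ηhat :=
    ⟨fun x => congrFun hhatfix x ▸ isProbabilityMeasure_paramDistOne hm _⟩
  have hπ := ae_mem_Icc_of_bellman_eq hγ0 hγ1 hsupp hfix htight
  have hhat := ae_mem_Icc_of_proj_bellman_eq hγ0 hγ1 hsupp hlam hhatfix hhattight
  have hV : Rmin / (1 - γ) ≤ Rmax / (1 - γ) := (hπ x).exists.elim fun _ hz => hz.1.trans hz.2
  have hfin : ⨆ x, cdfDist (ηhat x) (ηπ x) ≠ ∞ :=
    ne_top_of_le_ne_top ENNReal.ofReal_ne_top (iSup_le fun x =>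
      cdfDist_le_of_ae_mem_Icc zero_le_one (hhat x) (hπ x) fun y => abs_sub_le_iff.2
        ⟨by linarith [cdf_le_one (ηhat x) y, cdf_nonneg (ηπ x) y],
          by linarith [cdf_le_one (ηπ x) y, cdf_nonneg (ηhat x) y]⟩)
  rw [← div_div]
  exact w1_le_of_cdfDist_le
    (div_nonneg (div_nonneg (sub_nonneg.2 hV) (by positivity)) (sub_nonneg.2 hγ1.le))
    (cdfDist_le_of_bellman_eq hγ0 hγ1 hfix hfin (fun x =>
      cdfDist_bellman_le_of_proj_bellman_eq hγ0 hγ1 (hsupp x) hm hlam hhatfix hhat) x)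

/-- Approximation quality of QDP fixed points: if all reward distributions are
supported on `[R_min, R_max]`, then the fixed point `η̂^π_λ` of `Π^λ T^π` in `F_{Q,m}^X`
satisfies `w̄_1(η̂^π_λ, η^π) ≤ (V_max − V_min)/(2m(1−γ))`, stated coordinatewise over states
(which is equivalent to the bound on the max over states). -/
theorem qdp_fixed_point_quality
    {X : Type*} [Fintype X] [MeasurableSpace X] [MeasurableSingletonClass X]
    (P : X → Measure (ℝ × X)) (hP : ∀ x, IsProbabilityMeasure (P x))
    (γ : ℝ) (hγ0 : 0 ≤ γ) (hγ1 : γ < 1)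
    (Rmin Rmax : ℝ) (hR : Rmin ≤ Rmax)
    (hsupp : ∀ x, P x {p : ℝ × X | p.1 ∈ Set.Icc Rmin Rmax}ᶜ = 0)
    (ηπ : X → Measure ℝ) (hηπ : ∀ x, IsProbabilityMeasure (ηπ x))
    (hfix : bellman P γ ηπ = ηπ)
    (huniq : ∀ η : X → Measure ℝ, (∀ x, IsProbabilityMeasure (η x)) →
      bellman P γ η = η → η = ηπ)
    {m : ℕ} (hm : 0 < m) (lam : X → Fin m → ℝ) (hlam : lam ∈ unitCube X m)
    (ηhat : X → Measure ℝ) (hhatFQ : ∀ x, ηhat x ∈ FQ m)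
    (hhatfix : proj lam (bellman P γ ηhat) = ηhat) :
    ∀ x, w1 (ηhat x) (ηπ x)
      ≤ (Rmax / (1 - γ) - Rmin / (1 - γ)) / (2 * m * (1 - γ)) := by
  have hhat (x : X) : IsProbabilityMeasure (ηhat x) :=
    congrFun hhatfix x ▸ isProbabilityMeasure_paramDistOne hm _
  have hMarkov : IsMarkovKernel (⟨ηπ, .of_discrete⟩ : Kernel X ℝ) := ⟨hηπ⟩
  exact qdp_fixed_point_quality_general P hP γ hγ0 hγ1 Rmin Rmax hsupp ⟨ηπ, .of_discrete⟩ hfix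
    (isTightMeasureSet_range_of_finite fun _ => isTightMeasureSet_singleton) hm lam hlam
    ⟨ηhat, .of_discrete⟩ hhatfix
    (isTightMeasureSet_range_of_finite fun _ => isTightMeasureSet_singleton)
end
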